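/- Let d > 2s with s ∈ (0,1) and p ∈ [2, 2d/(d−2s)]. Suppose ρ satisfies the two-power bounds with γ_0 ∈ [0,d) and γ ∈ (d − (p/2)(d−2s), d]. Then every v ∈ X_{p,s,ρ} equals the Riesz potential of its fractional Laplacian: v = I_{d,s} ∗ (−Δ)^s v almost everywhere, where I_{d,s}(x) = κ_{d,s}|x|^{−(d−2s)}. -/

import Mathlib

open MeasureTheory Filter Metric Set
open scoped Topology ENNReal

noncomputable section

abbrev Ed (d : ℕ) := EuclideanSpace ℝ (Fin d)

/-- Truncated (away from the singularity) fractional-Laplacian integral. -/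
noncomputable def fracLapTrunc (d : ℕ) (s : ℝ) (f : Ed d → ℝ) (x : Ed d) (ε : ℝ) : ℝ :=
  ∫ y in {y : Ed d | ε ≤ dist x y}, (f x - f y) / dist x y ^ ((d : ℝ) + 2 * s)

/-- Fractional Laplacian, as a principal value (limit of truncated integrals),
with normalization constant `Cds`. -/
noncomputable def fracLap (d : ℕ) (s Cds : ℝ) (f : Ed d → ℝ) (x : Ed d) : ℝ :=
  Cds * limUnder (𝓝[>] (0:ℝ)) (fracLapTrunc d s f x)

/-- `V` is the distributional fractional Laplacian of `v`. -/
def IsDistFracLap (d : ℕ) (s Cds : ℝ) (v V : Ed d → ℝ) : Prop :=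
  ∀ φ : Ed d → ℝ, ContDiff ℝ (⊤ : ℕ∞) φ → HasCompactSupport φ →
    ∫ x, v x * fracLap d s Cds φ x = ∫ x, V x * φ x

/-- The nonlocal quantity `l_{p,s}(f)(x) = ∫ |f x - f y|^p / |x-y|^{d+ps} dy`. -/
noncomputable def lps (d : ℕ) (p s : ℝ) (f : Ed d → ℝ) (x : Ed d) : ℝ :=
  ∫ y, |f x - f y| ^ p / dist x y ^ ((d : ℝ) + p * s)

/-- A weight comparable to `|x|^{-γ₀}` on the unit ball and to `|x|^{-γ}` outside. -/
def TwoPowerWeight (d : ℕ) (ρ : Ed d → ℝ) (c C γ₀ γ : ℝ) : Prop :=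
  0 < c ∧ c < C ∧
  (∀ᵐ x : Ed d, ‖x‖ ≤ 1 → c * ‖x‖ ^ (-γ₀) ≤ ρ x ∧ ρ x ≤ C * ‖x‖ ^ (-γ₀)) ∧
  (∀ᵐ x : Ed d, 1 < ‖x‖ → c * ‖x‖ ^ (-γ) ≤ ρ x ∧ ρ x ≤ C * ‖x‖ ^ (-γ))

/-- Standard mollification `f_ε = η_ε ∗ f` with `η_ε(x) = ε^{-d} η(x/ε)`. -/
noncomputable def mollify (d : ℕ) (η : Ed d → ℝ) (ε : ℝ) (f : Ed d → ℝ) (x : Ed d) : ℝ :=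
  ∫ y, (ε ^ (-(d:ℝ)) * η (ε⁻¹ • (x - y))) * f y

/-- A smooth nonnegative probability mollifier supported in the unit ball. -/
def IsMollifier (d : ℕ) (η : Ed d → ℝ) : Prop :=
  ContDiff ℝ (⊤ : ℕ∞) η ∧ (∀ x, 0 ≤ η x) ∧ tsupport η ⊆ closedBall (0 : Ed d) 1 ∧ ∫ x, η x = 1

/-- Membership in the weighted Lebesgue space `L^p(ρ dx)`. -/
def MemWLp (d : ℕ) (p : ℝ) (ρ f : Ed d → ℝ) : Prop :=
  AEStronglyMeasurable f (volume : Measure (Ed d)) ∧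
    Integrable (fun x => |f x| ^ p * ρ x)

/-- `v ∈ X_{p,s,ρ}` with distributional fractional Laplacian `V`. -/
def MemX (d : ℕ) (s Cds p : ℝ) (ρ : Ed d → ℝ) (v V : Ed d → ℝ) : Prop :=
  MemWLp d p ρ v ∧ IsDistFracLap d s Cds v V ∧
    MemWLp d (p / (p - 1)) (fun x => ρ x ^ (-(p / (p - 1) - 1))) V

/-- Weighted `L^p` norm. -/
noncomputable def wNorm (d : ℕ) (p : ℝ) (ρ f : Ed d → ℝ) : ℝ :=
  (∫ x, |f x| ^ p * ρ x) ^ (1 / p)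

/-- Norm of the space `X_{p,s,ρ}` (on the pair `(v, (−Δ)^s v)`). -/
noncomputable def xNorm (d : ℕ) (p : ℝ) (ρ : Ed d → ℝ) (v V : Ed d → ℝ) : ℝ :=
  Real.sqrt ((wNorm d p ρ v) ^ 2 +
    (wNorm d (p / (p - 1)) (fun x => ρ x ^ (-(p / (p - 1) - 1))) V) ^ 2)

/-- Riesz potential `I_{d,s} ∗ f` with kernel constant `κ`. -/
noncomputable def riesz (d : ℕ) (s κ : ℝ) (f : Ed d → ℝ) (x : Ed d) : ℝ :=
  ∫ y, κ * ‖x - y‖ ^ (-((d:ℝ) - 2 * s)) * f y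

end

/-! Convolving the Green function identity with a test function `ψ` shows that `κ‖·‖⁻ᵃ ⋆ ψ`, with
`a = d - 2 * s`, is a preimage of `ψ` under the fractional Laplacian. It is not compactly supported,
so it cannot be tested against `v`. Truncate the kernel at radius `R`, using the superposition
`‖z‖⁻ᵃ = c⁻¹ ∫₀^∞ τᵃ⁻¹ χ(τ‖z‖) dτ` of dilates of a cutoff: the part removed is smooth at scale `R`,
and after convolution with `ψ` its fractional Laplacian is `O(R ^ (2 * s) * (R + ‖x‖) ^ (-N))` with
`N = d + 2 * s`. These errors are bounded in the dual of `L^p((1 + ‖x‖) ^ (-d) dx)` and tend to zero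
pointwise, hence weakly, so the truncated identity tested against `v` passes to the limit `R → ∞`;
Fubini then moves the Riesz kernel from `ψ` to `V`. -/

open Module ContinuousLinearMap
open scoped NNReal Convolution

section PowerBounds

theorem le_mul_add_rpow_neg {y t R A B m : ℝ} (hR : 0 < R) (ht : 0 ≤ t) (hm : 0 ≤ m)
    (hA : 0 ≤ A) (hB : 0 ≤ B) (near : t ≤ 2 * R → y ≤ A) (far : 2 * R < t → y ≤ B * t ^ (-m)) :
    y ≤ (A * (3 * R) ^ m + B * 2 ^ m) * (R + t) ^ (-m) := by
  have hRt : 0 < R + t := by positivity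
  rcases le_or_gt t (2 * R) with h | h
  · calc y ≤ A * ((3 * R) ^ m * (3 * R) ^ (-m)) := by
          rw [Real.rpow_neg (by positivity), mul_inv_cancel₀ (by positivity), mul_one]
          exact near h
      _ ≤ A * ((3 * R) ^ m * (R + t) ^ (-m)) := by
          gcongr A * ((3 * R) ^ m * ?_)
          exact Real.rpow_le_rpow_of_nonpos hRt (by linarith) (neg_nonpos.2 hm)
      _ ≤ (A * (3 * R) ^ m + B * 2 ^ m) * (R + t) ^ (-m) := by
          rw [← mul_assoc]
          gcongr
          exact le_add_of_nonneg_right (by positivity)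
  · calc y ≤ B * (2 ^ m * (2 * t) ^ (-m)) := by
          rw [Real.mul_rpow zero_le_two ht, ← mul_assoc (2 ^ m), ← Real.rpow_add two_pos,
            add_neg_cancel, Real.rpow_zero, one_mul]
          exact far h
      _ ≤ B * (2 ^ m * (R + t) ^ (-m)) := by
          gcongr B * (2 ^ m * ?_)
          exact Real.rpow_le_rpow_of_nonpos hRt (by linarith) (neg_nonpos.2 hm)
      _ ≤ (A * (3 * R) ^ m + B * 2 ^ m) * (R + t) ^ (-m) := by
          rw [← mul_assoc]
          gcongr
          exact le_add_of_nonneg_left (by positivity)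

theorem norm_integral_mul_le_of_le_rpow_neg {E : Type*} [NormedAddCommGroup E]
    [MeasurableSpace E] {μ : Measure E} {f k : E → ℝ} {B M m : ℝ} (hf : Integrable f μ)
    (hfM : ∀ z, M < ‖z‖ → f z = 0) (hm : 0 ≤ m) (hB : 0 ≤ B)
    (hk : ∀ y ≠ 0, |k y| ≤ B * ‖y‖ ^ (-m)) {x : E} (hx : 0 < ‖x‖) (hMx : 2 * M ≤ ‖x‖) :
    |∫ z, f z * k (x - z) ∂μ| ≤ B * (‖x‖ / 2) ^ (-m) * ∫ z, |f z| ∂μ := by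
  rw [← integral_const_mul, ← Real.norm_eq_abs]
  refine norm_integral_le_of_norm_le (hf.norm.const_mul _) (ae_of_all _ fun z => ?_)
  rcases lt_or_ge M ‖z‖ with hz | hz
  · simp [hfM z hz]
  · have half_le : ‖x‖ / 2 ≤ ‖x - z‖ := by linarith [norm_sub_norm_le x z]
    rw [norm_mul, mul_comm, Real.norm_eq_abs, Real.norm_eq_abs]
    gcongr
    refine (hk _ (norm_pos_iff.1 (by linarith))).trans ?_
    gcongr B * ?_
    exact Real.rpow_le_rpow_of_nonpos (by positivity) half_le (neg_nonpos.2 hm)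

theorem min_one_norm_inv_smul_sq_mul_rpow_neg {E : Type*} [NormedAddCommGroup E]
    [NormedSpace ℝ E] {N R : ℝ} (hR : 0 < R) (h : E) :
    min 1 (‖R⁻¹ • h‖ ^ 2) * ‖h‖ ^ (-N) =
      R ^ (-N) * (min 1 (‖R⁻¹ • h‖ ^ 2) * ‖R⁻¹ • h‖ ^ (-N)) := by
  have rpow_h : ‖h‖ ^ (-N) = R ^ (-N) * ‖R⁻¹ • h‖ ^ (-N) := by
    rw [← Real.mul_rpow hR.le (norm_nonneg _), norm_smul, norm_inv, Real.norm_of_nonneg hR.le,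
      mul_inv_cancel_left₀ hR.ne']
  rw [rpow_h]
  ring

variable {E : Type*} [NormedAddCommGroup E] [NormedSpace ℝ E] [FiniteDimensional ℝ E]
  [MeasurableSpace E] [BorelSpace E] {μ : Measure E} [μ.IsAddHaarMeasure]

theorem integrable_of_norm_le_rpow_near_far [Nontrivial E] {F : Type*} [NormedAddCommGroup F]
    {f : E → F} {A B α β : ℝ} (hα : α < finrank ℝ E) (hβ : finrank ℝ E < β)
    (hf : AEStronglyMeasurable f μ)
    (near : ∀ᵐ x ∂μ, ‖x‖ ≤ 1 → ‖f x‖ ≤ A * ‖x‖ ^ (-α))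
    (far : ∀ᵐ x ∂μ, 1 < ‖x‖ → ‖f x‖ ≤ B * ‖x‖ ^ (-β)) : Integrable f μ := by
  have int_near : Integrable ((ball (0 : E) 2).indicator fun x => |A| * ‖x‖ ^ (-α)) μ := by
    refine (integrableOn_ball_of_norm_le_rpow (C := |A|) Module.finrank_pos hα
      (ae_of_all _ fun x => (Real.norm_of_nonneg (by positivity)).le) ?_).integrable_indicator
      measurableSet_ball
    exact Measurable.aestronglyMeasurable (by fun_prop)
  have int_far : Integrable (fun x : E => |B| * (2 ^ β * (1 + ‖x‖) ^ (-β))) μ :=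
    ((integrable_one_add_norm hβ).const_mul _).const_mul _
  refine (int_near.add int_far).mono' hf ?_
  filter_upwards [near, far] with x hx_near hx_far
  have hA : 0 ≤ (ball (0 : E) 2).indicator (fun x => |A| * ‖x‖ ^ (-α)) x :=
    indicator_nonneg (fun _ _ => by positivity) x
  rcases le_or_gt ‖x‖ 1 with h | h
  · calc ‖f x‖ ≤ |A| * ‖x‖ ^ (-α) := (hx_near h).trans (by gcongr; exact le_abs_self A)
      _ = (ball (0 : E) 2).indicator (fun x => |A| * ‖x‖ ^ (-α)) x :=
        (indicator_of_mem (mem_ball_zero_iff.2 (h.trans_lt one_lt_two))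
          fun x => |A| * ‖x‖ ^ (-α)).symm
      _ ≤ _ := le_add_of_nonneg_right (by positivity)
  · have hβ0 : 0 ≤ β := (Nat.cast_nonneg _).trans hβ.le
    calc ‖f x‖ ≤ |B| * (2 ^ β * (2 * ‖x‖) ^ (-β)) := by
          rw [Real.mul_rpow zero_le_two (norm_nonneg x), ← mul_assoc (2 ^ β),
            ← Real.rpow_add two_pos, add_neg_cancel, Real.rpow_zero, one_mul]
          exact (hx_far h).trans (by gcongr; exact le_abs_self B)
      _ ≤ |B| * (2 ^ β * (1 + ‖x‖) ^ (-β)) := by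
          gcongr |B| * (2 ^ β * ?_)
          exact Real.rpow_le_rpow_of_nonpos (by positivity) (by linarith) (neg_nonpos.2 hβ0)
      _ ≤ _ := le_add_of_nonneg_left hA

theorem locallyIntegrable_norm_rpow_neg [Nontrivial E] {a : ℝ} (ha : a < finrank ℝ E) :
    LocallyIntegrable (fun x : E => ‖x‖ ^ (-a)) μ :=
  locallyIntegrable_of_norm_le_rpow (C := 1) Module.finrank_pos ha
    (ae_of_all _ fun x => by rw [one_mul, Real.norm_of_nonneg (by positivity)])
    (Measurable.aestronglyMeasurable (by fun_prop))

theorem integrable_min_one_norm_sq_mul_rpow_neg [Nontrivial E] {N : ℝ} (hN : finrank ℝ E < N)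
    (hN2 : N < finrank ℝ E + 2) : Integrable (fun h : E => min 1 (‖h‖ ^ 2) * ‖h‖ ^ (-N)) μ := by
  refine integrable_of_norm_le_rpow_near_far (A := 1) (B := 1) (α := N - 2) (by linarith) hN
    (Measurable.aestronglyMeasurable (by fun_prop)) (ae_of_all _ fun h _ => ?_)
    (ae_of_all _ fun h _ => ?_)
  · rw [Real.norm_of_nonneg (by positivity), one_mul]
    rcases eq_or_ne h 0 with rfl | h0
    · simpa using Real.rpow_nonneg le_rfl _
    · calc min 1 (‖h‖ ^ 2) * ‖h‖ ^ (-N) ≤ ‖h‖ ^ (2 : ℝ) * ‖h‖ ^ (-N) := by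
            rw [Real.rpow_two]; gcongr; exact min_le_right _ _
        _ = ‖h‖ ^ (-(N - 2)) := by rw [← Real.rpow_add (norm_pos_iff.2 h0)]; congr 1; ring
  · rw [Real.norm_of_nonneg (by positivity)]
    gcongr
    exact min_le_left _ _

theorem integrable_min_one_norm_inv_smul_sq_mul_rpow_neg [Nontrivial E] {N R : ℝ}
    (hN : finrank ℝ E < N) (hN2 : N < finrank ℝ E + 2) (hR : 0 < R) :
    Integrable (fun h : E => min 1 (‖R⁻¹ • h‖ ^ 2) * ‖h‖ ^ (-N)) μ := by
  simp_rw [min_one_norm_inv_smul_sq_mul_rpow_neg hR]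
  exact ((integrable_min_one_norm_sq_mul_rpow_neg hN hN2).comp_smul
    (inv_ne_zero hR.ne')).const_mul _

theorem integral_min_one_norm_inv_smul_sq_mul_rpow_neg {N R : ℝ} (hR : 0 < R) :
    ∫ h : E, min 1 (‖R⁻¹ • h‖ ^ 2) * ‖h‖ ^ (-N) ∂μ =
      R ^ (finrank ℝ E - N) * ∫ h : E, min 1 (‖h‖ ^ 2) * ‖h‖ ^ (-N) ∂μ := by
  simp_rw [min_one_norm_inv_smul_sq_mul_rpow_neg hR]
  rw [integral_const_mul, Measure.integral_comp_inv_smul_of_nonneg μ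
    (fun h : E => min 1 (‖h‖ ^ 2) * ‖h‖ ^ (-N)) hR.le, smul_eq_mul, ← mul_assoc,
    ← Real.rpow_natCast R, ← Real.rpow_add hR, neg_add_eq_sub]

theorem integrableOn_norm_rpow_neg_setOf_le {N ε : ℝ} (hN : finrank ℝ E < N) (hε : 0 < ε) :
    IntegrableOn (fun h : E => ‖h‖ ^ (-N)) {h | ε ≤ ‖h‖} μ := by
  have hN0 : 0 ≤ N := (Nat.cast_nonneg _).trans hN.le
  refine ((integrable_one_add_norm hN).const_mul ((1 + ε⁻¹) ^ N)).integrableOn.mono'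
    (Measurable.aestronglyMeasurable (by fun_prop))
    ((ae_restrict_iff' (measurableSet_le measurable_const measurable_norm)).2
      (ae_of_all _ fun h (hh : ε ≤ ‖h‖) => ?_))
  have hh0 : 0 < ‖h‖ := hε.trans_le hh
  have one_add_le : 1 + ‖h‖ ≤ (1 + ε⁻¹) * ‖h‖ := by
    have : 1 ≤ ε⁻¹ * ‖h‖ := by rwa [← div_eq_inv_mul, one_le_div hε]
    linarith
  calc ‖‖h‖ ^ (-N)‖ = (1 + ε⁻¹) ^ N * ((1 + ε⁻¹) * ‖h‖) ^ (-N) := by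
        rw [Real.norm_of_nonneg (by positivity), Real.mul_rpow (by positivity) hh0.le, ← mul_assoc,
          ← Real.rpow_add (by positivity), add_neg_cancel, Real.rpow_zero, one_mul]
    _ ≤ (1 + ε⁻¹) ^ N * (1 + ‖h‖) ^ (-N) := by
        gcongr (1 + ε⁻¹) ^ N * ?_
        exact Real.rpow_le_rpow_of_nonpos (by positivity) one_add_le (neg_nonpos.2 hN0)

end PowerBounds

section SecondDifference

/-- The symmetric second difference `2 f(x) - f(x - h) - f(x + h)`, the numerator of the
symmetrized integrand of the fractional Laplacian. -/
def secondDiff {E : Type*} [AddGroup E] (f : E → ℝ) (x h : E) : ℝ :=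
  2 * f x - f (x - h) - f (x + h)

section Invariant

variable {G : Type*} [AddGroup G] [MeasurableSpace G] [MeasurableAdd G] {μ : Measure G}
  [μ.IsAddRightInvariant] {f : G → ℝ}

theorem integrable_secondDiff (hf : Integrable f μ) (h : G) :
    Integrable (fun x => secondDiff f x h) μ :=
  ((hf.const_mul 2).sub (hf.comp_sub_right h)).sub (hf.comp_add_right h)

theorem integral_abs_secondDiff_le (hf : Integrable f μ) (h : G) :
    ∫ x, |secondDiff f x h| ∂μ ≤ 4 * ∫ x, |f x| ∂μ := by
  have int_two : Integrable (fun x => 2 * |f x|) μ := hf.abs.const_mul 2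
  have int_sub : Integrable (fun x => |f (x - h)|) μ := hf.abs.comp_sub_right h
  have int_add : Integrable (fun x => |f (x + h)|) μ := hf.abs.comp_add_right h
  have int_sum : Integrable (fun x => 2 * |f x| + |f (x - h)|) μ := int_two.add int_sub
  calc ∫ x, |secondDiff f x h| ∂μ
      ≤ ∫ x, (2 * |f x| + |f (x - h)| + |f (x + h)|) ∂μ := by
        refine integral_mono (integrable_secondDiff hf h).abs (int_sum.add int_add)
          fun x => ?_
        refine (abs_sub _ _).trans (add_le_add_left ((abs_sub _ _).trans_eq ?_) _)
        rw [abs_mul, abs_two]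
    _ = 4 * ∫ x, |f x| ∂μ := by
        rw [integral_add int_sum int_add, integral_add int_two int_sub,
          integral_const_mul, integral_sub_right_eq_self (fun x => |f x|),
          integral_add_right_eq_self (fun x => |f x|)]
        ring

end Invariant

theorem secondDiff_convolution {G : Type*} [AddCommGroup G] [MeasurableSpace G] {μ : Measure G}
    {f ψ : G → ℝ} (hfψ : ConvolutionExists f ψ (lsmul ℝ ℝ) μ) (x h : G) :
    secondDiff (f ⋆[lsmul ℝ ℝ, μ] ψ) x h = ∫ z, f z * secondDiff ψ (x - z) h ∂μ := by
  have int_x : Integrable (fun z => f z * ψ (x - z)) μ := hfψ x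
  have int_sub : Integrable (fun z => f z * ψ (x - h - z)) μ := hfψ (x - h)
  have int_add : Integrable (fun z => f z * ψ (x + h - z)) μ := hfψ (x + h)
  simp only [secondDiff, convolution_lsmul, smul_eq_mul]
  rw [← integral_const_mul, ← integral_sub (int_x.const_mul 2) int_sub,
    ← integral_sub (f := fun z => 2 * (f z * ψ (x - z)) - f z * ψ (x - h - z))
      ((int_x.const_mul 2).sub int_sub) int_add]
  refine integral_congr_ae (ae_of_all _ fun z => ?_)
  simp only [sub_right_comm x z h, sub_add_eq_add_sub]
  ring

variable {E : Type*} [NormedAddCommGroup E]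

theorem abs_secondDiff_le {f : E → ℝ} {A : ℝ} (hA : ∀ x, |f x| ≤ A) (x h : E) :
    |secondDiff f x h| ≤ 4 * A := by
  have hx := abs_le.1 (hA x)
  have h_sub := abs_le.1 (hA (x - h))
  have h_add := abs_le.1 (hA (x + h))
  exact abs_le.2 ⟨by unfold secondDiff; linarith, by unfold secondDiff; linarith⟩

theorem secondDiff_comp_sub_left (f : E → ℝ) (x z h : E) :
    secondDiff (fun y => f (x - y)) z h = secondDiff f (x - z) h := by
  simp only [secondDiff, sub_sub_eq_add_sub, sub_add_eq_sub_sub, add_sub_right_comm]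
  ring

theorem secondDiff_eq_zero_of_norm_lt {f : E → ℝ} {M : ℝ} (hf : ∀ z, M < ‖z‖ → f z = 0) {x h : E}
    (hx : M + ‖h‖ < ‖x‖) : secondDiff f x h = 0 := by
  have h0 := norm_nonneg h
  have h_sub : M < ‖x - h‖ := by linarith [norm_sub_norm_le x h]
  have h_add : M < ‖x + h‖ := by linarith [norm_sub_le_norm_add x h]
  simp [secondDiff, hf x (by linarith), hf _ h_sub, hf _ h_add]

variable [NormedSpace ℝ E]

theorem abs_secondDiff_le_of_lipschitz_fderiv {f : E → ℝ} (hf : Differentiable ℝ f) {B : ℝ≥0}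
    (hB : LipschitzWith B (fderiv ℝ f)) (x h : E) : |secondDiff f x h| ≤ 2 * B * ‖h‖ ^ 2 := by
  have hasDeriv (t : ℝ) : HasDerivAt (fun t : ℝ => f (x - t • h) + f (x + t • h))
      (fderiv ℝ f (x - t • h) (-h) + fderiv ℝ f (x + t • h) h) t := by
    have h_sub : HasDerivAt (fun t : ℝ => x - t • h) (-h) t := by
      simpa using ((hasDerivAt_id t).smul_const h).const_sub x
    have h_add : HasDerivAt (fun t : ℝ => x + t • h) h t := by
      simpa using ((hasDerivAt_id t).smul_const h).const_add x
    exact ((hf _).hasFDerivAt.comp_hasDerivAt t h_sub).add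
      ((hf _).hasFDerivAt.comp_hasDerivAt t h_add)
  have deriv_le (t : ℝ) (ht : t ∈ Ico (0 : ℝ) 1) :
      ‖fderiv ℝ f (x - t • h) (-h) + fderiv ℝ f (x + t • h) h‖ ≤ 2 * B * ‖h‖ ^ 2 := by
    have hsum : fderiv ℝ f (x - t • h) (-h) + fderiv ℝ f (x + t • h) h =
        (fderiv ℝ f (x + t • h) - fderiv ℝ f (x - t • h)) h := by simp; ring
    have hstep : (x + t • h) - (x - t • h) = (2 * t) • h := by module
    calc ‖fderiv ℝ f (x - t • h) (-h) + fderiv ℝ f (x + t • h) h‖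
        ≤ ‖fderiv ℝ f (x + t • h) - fderiv ℝ f (x - t • h)‖ * ‖h‖ :=
          hsum ▸ ContinuousLinearMap.le_opNorm _ _
      _ ≤ B * ‖(x + t • h) - (x - t • h)‖ * ‖h‖ := by gcongr; exact hB.norm_sub_le _ _
      _ = 2 * B * t * ‖h‖ ^ 2 := by
        rw [hstep, norm_smul, Real.norm_of_nonneg (by linarith [ht.1])]; ring
      _ ≤ 2 * B * 1 * ‖h‖ ^ 2 := by gcongr; exact ht.2.le
      _ = 2 * B * ‖h‖ ^ 2 := by ring
  have increment_le := norm_image_sub_le_of_norm_deriv_le_segment_01'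
    (fun t _ => (hasDeriv t).hasDerivWithinAt) deriv_le
  simp only [one_smul, zero_smul, sub_zero, add_zero, Real.norm_eq_abs] at increment_le
  rw [← abs_neg]
  convert increment_le using 2
  unfold secondDiff
  ring

theorem exists_abs_secondDiff_le {ψ : E → ℝ} (hψ : ContDiff ℝ 2 ψ) (hc : HasCompactSupport ψ) :
    ∃ D, 0 ≤ D ∧ ∀ x h, |secondDiff ψ x h| ≤ D * min 1 (‖h‖ ^ 2) := by
  obtain ⟨A, hA⟩ := hc.exists_bound_of_continuous hψ.continuous
  obtain ⟨B, hB⟩ := ContDiff.lipschitzWith_of_hasCompactSupport (n := 1) (hc.fderiv ℝ)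
    (hψ.fderiv_right (by norm_num)) one_ne_zero
  have hA0 : 0 ≤ A := (norm_nonneg _).trans (hA 0)
  refine ⟨4 * A + 2 * B, by positivity, fun x h => ?_⟩
  rcases min_cases 1 (‖h‖ ^ 2) with ⟨hm, -⟩ | ⟨hm, -⟩
  · rw [hm]
    have : 0 ≤ (B : ℝ) := B.coe_nonneg
    linarith [abs_secondDiff_le hA x h]
  · rw [hm]
    exact (abs_secondDiff_le_of_lipschitz_fderiv (hψ.differentiable (by norm_num)) hB x h).trans
      (by gcongr; linarith)

end SecondDifference

section SecondDifferenceIntegral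

variable {E : Type*} [NormedAddCommGroup E] [NormedSpace ℝ E] [FiniteDimensional ℝ E]
  [MeasurableSpace E] [BorelSpace E] {μ : Measure E} [μ.IsAddHaarMeasure]

theorem exists_integral_abs_secondDiff_le {ψ : E → ℝ} (hψ : ContDiff ℝ 2 ψ)
    (hc : HasCompactSupport ψ) :
    ∃ D, ∀ h, ∫ x, |secondDiff ψ x h| ∂μ ≤ D * min 1 (‖h‖ ^ 2) := by
  obtain ⟨D, hD0, hD⟩ := exists_abs_secondDiff_le hψ hc
  obtain ⟨M, -, hM⟩ := hc.exists_pos_le_norm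
  have hint : Integrable ψ μ := hψ.continuous.integrable_of_hasCompactSupport hc
  set L := ∫ x, |ψ x| ∂μ
  set W := μ.real (closedBall 0 (M + 1))
  have hL : 0 ≤ L := integral_nonneg fun x => abs_nonneg _
  refine ⟨4 * L + D * W, fun h => ?_⟩
  rcases le_or_gt ‖h‖ 1 with hh | hh
  · have vanish (x : E) (hx : x ∉ closedBall 0 (M + 1)) : |secondDiff ψ x h| = 0 := by
      rw [mem_closedBall_zero_iff, not_le] at hx
      rw [secondDiff_eq_zero_of_norm_lt (fun z hz => hM z hz.le) (by linarith), abs_zero]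
    calc ∫ x, |secondDiff ψ x h| ∂μ = ∫ x in closedBall 0 (M + 1), |secondDiff ψ x h| ∂μ :=
          (setIntegral_eq_integral_of_forall_compl_eq_zero vanish).symm
      _ ≤ ∫ _ in closedBall (0 : E) (M + 1), D * min 1 (‖h‖ ^ 2) ∂μ :=
          setIntegral_mono (integrable_secondDiff hint h).abs.integrableOn
            (integrableOn_const measure_closedBall_lt_top.ne) (hD · h)
      _ = D * W * min 1 (‖h‖ ^ 2) := by
          rw [setIntegral_const, smul_eq_mul]; ring
      _ ≤ (4 * L + D * W) * min 1 (‖h‖ ^ 2) := by gcongr; linarith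
  · have hmin : min 1 (‖h‖ ^ 2) = 1 := min_eq_left (one_le_pow₀ hh.le)
    rw [hmin, mul_one]
    have : 0 ≤ D * W := by positivity
    linarith [integral_abs_secondDiff_le hint h]

end SecondDifferenceIntegral

section HypersingularIntegral

/-- The hypersingular integral `∫ ‖h‖⁻ᴺ (f(x) - (f(x - h) + f(x + h)) / 2) dh`: the fractional
Laplacian of order `N - dim E` up to its normalizing constant, written with symmetric second
differences so that it converges absolutely. -/
noncomputable def hypersingularIntegral {E : Type*} [NormedAddCommGroup E] [MeasureSpace E] (N : ℝ)
    (f : E → ℝ) (x : E) : ℝ :=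
  ∫ h, ‖h‖ ^ (-N) * (secondDiff f x h / 2)

theorem hypersingularIntegral_comp_sub_left {E : Type*} [NormedAddCommGroup E] [MeasureSpace E]
    (N : ℝ) (f : E → ℝ) (x z : E) :
    hypersingularIntegral N (fun y => f (x - y)) z = hypersingularIntegral N f (x - z) := by
  simp only [hypersingularIntegral, secondDiff_comp_sub_left]

theorem norm_rpow_neg_mul_secondDiff_le {E : Type*} [NormedAddCommGroup E] [NormedSpace ℝ E]
    {f : E → ℝ} {D N R : ℝ} {x : E}
    (hD : ∀ h, |secondDiff f x h| ≤ D * min 1 (‖R⁻¹ • h‖ ^ 2)) (h : E) :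
    ‖‖h‖ ^ (-N) * (secondDiff f x h / 2)‖ ≤ D / 2 * (min 1 (‖R⁻¹ • h‖ ^ 2) * ‖h‖ ^ (-N)) := by
  rw [norm_mul, Real.norm_of_nonneg (by positivity), Real.norm_eq_abs, abs_div, abs_two]
  calc ‖h‖ ^ (-N) * (|secondDiff f x h| / 2)
      ≤ ‖h‖ ^ (-N) * (D * min 1 (‖R⁻¹ • h‖ ^ 2) / 2) := by gcongr; exact hD h
    _ = D / 2 * (min 1 (‖R⁻¹ • h‖ ^ 2) * ‖h‖ ^ (-N)) := by ring

theorem abs_hypersingularIntegral_le_of_norm_lt {E : Type*} [NormedAddCommGroup E]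
    [MeasureSpace E] [BorelSpace E] [(volume : Measure E).IsAddLeftInvariant]
    [(volume : Measure E).IsNegInvariant] {ψ : E → ℝ} {M N : ℝ} (hψ : Integrable ψ)
    (hM : ∀ z, M < ‖z‖ → ψ z = 0) (hN : 0 ≤ N) {x : E} (hx : 0 < ‖x‖) (hMx : 2 * M < ‖x‖) :
    |hypersingularIntegral N ψ x| ≤ (2 ^ N * ∫ z, |ψ z|) * ‖x‖ ^ (-N) := by
  have hψx : ψ x = 0 := hM x (by linarith)
  have kernel_le {h : E} (h_ne : ψ (x - h) ≠ 0 ∨ ψ (x + h) ≠ 0) :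
      ‖h‖ ^ (-N) ≤ 2 ^ N * ‖x‖ ^ (-N) := by
    have half_le : ‖x‖ / 2 ≤ ‖h‖ := by
      rcases h_ne with h_ne | h_ne
      · linarith [not_lt.1 (mt (hM _) h_ne), norm_sub_norm_le x h]
      · linarith [not_lt.1 (mt (hM _) h_ne), norm_sub_le_norm_add x h]
    calc ‖h‖ ^ (-N) ≤ (‖x‖ / 2) ^ (-N) :=
          Real.rpow_le_rpow_of_nonpos (by positivity) half_le (neg_nonpos.2 hN)
      _ = 2 ^ N * ‖x‖ ^ (-N) := by
          rw [Real.div_rpow hx.le zero_le_two, Real.rpow_neg zero_le_two, div_inv_eq_mul, mul_comm]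
  have int_sub : Integrable (fun h => |ψ (x - h)|) := hψ.abs.comp_sub_left x
  have int_add : Integrable (fun h => |ψ (x + h)|) := hψ.abs.comp_add_left x
  calc |hypersingularIntegral N ψ x|
      ≤ ∫ h, 2 ^ N * ‖x‖ ^ (-N) * ((|ψ (x - h)| + |ψ (x + h)|) / 2) := by
        rw [← Real.norm_eq_abs, hypersingularIntegral]
        refine norm_integral_le_of_norm_le (((int_sub.add int_add).div_const 2).const_mul _)
          (ae_of_all _ fun h => ?_)
        by_cases h_zero : ψ (x - h) = 0 ∧ ψ (x + h) = 0
        · simp [secondDiff, hψx, h_zero]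
        · rw [norm_mul, Real.norm_of_nonneg (by positivity), Real.norm_eq_abs, abs_div, abs_two]
          gcongr
          · exact kernel_le (by tauto)
          · rw [secondDiff, hψx, mul_zero, zero_sub]
            exact (abs_sub _ _).trans_eq (by rw [abs_neg])
    _ = (2 ^ N * ∫ z, |ψ z|) * ‖x‖ ^ (-N) := by
        rw [integral_const_mul, integral_div, integral_add int_sub int_add,
          integral_sub_left_eq_self (fun z => |ψ z|), integral_add_left_eq_self (fun z => |ψ z|)]
        ring

variable {E : Type*} [NormedAddCommGroup E] [NormedSpace ℝ E] [FiniteDimensional ℝ E]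
  [MeasureSpace E] [BorelSpace E] [(volume : Measure E).IsAddHaarMeasure]
  {N : ℝ} {f ψ : E → ℝ}

variable [Nontrivial E] {D R : ℝ} {x : E}

theorem integrable_rpow_neg_mul_secondDiff (hN : finrank ℝ E < N)
    (hN2 : N < finrank ℝ E + 2) (hf : Measurable f) (hR : 0 < R)
    (hD : ∀ h, |secondDiff f x h| ≤ D * min 1 (‖R⁻¹ • h‖ ^ 2)) :
    Integrable (fun h => ‖h‖ ^ (-N) * (secondDiff f x h / 2)) := by
  refine ((integrable_min_one_norm_inv_smul_sq_mul_rpow_neg hN hN2 hR).const_mul (D / 2)).mono'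
    (Measurable.aestronglyMeasurable ?_) (ae_of_all _ (norm_rpow_neg_mul_secondDiff_le hD))
  unfold secondDiff
  fun_prop

theorem abs_hypersingularIntegral_le (hN : finrank ℝ E < N) (hN2 : N < finrank ℝ E + 2)
    (hR : 0 < R) (hD : ∀ h, |secondDiff f x h| ≤ D * min 1 (‖R⁻¹ • h‖ ^ 2)) :
    |hypersingularIntegral N f x| ≤
      D / 2 * (R ^ (finrank ℝ E - N) * ∫ h : E, min 1 (‖h‖ ^ 2) * ‖h‖ ^ (-N)) := by
  rw [← integral_min_one_norm_inv_smul_sq_mul_rpow_neg hR, ← integral_const_mul]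
  exact norm_integral_le_of_norm_le
    ((integrable_min_one_norm_inv_smul_sq_mul_rpow_neg hN hN2 hR).const_mul (D / 2))
    (ae_of_all _ (norm_rpow_neg_mul_secondDiff_le hD))

theorem exists_abs_hypersingularIntegral_le (hN : finrank ℝ E < N)
    (hN2 : N < finrank ℝ E + 2) (hψ : ContDiff ℝ 2 ψ) (hc : HasCompactSupport ψ) :
    ∃ K, 0 ≤ K ∧ ∀ x, |hypersingularIntegral N ψ x| ≤ K * (1 + ‖x‖) ^ (-N) := by
  obtain ⟨D, -, hD⟩ := exists_abs_secondDiff_le hψ hc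
  obtain ⟨M, -, hM⟩ := hc.exists_pos_le_norm
  have hN0 : 0 ≤ N := (Nat.cast_nonneg _).trans hN.le
  have hR : 0 < max 1 M := lt_max_of_lt_left one_pos
  obtain ⟨A, near⟩ : ∃ A, ∀ x, |hypersingularIntegral N ψ x| ≤ A :=
    ⟨_, fun x => abs_hypersingularIntegral_le (D := D) hN hN2 one_pos (by simpa using hD x)⟩
  have hA : 0 ≤ A := (abs_nonneg _).trans (near 0)
  set B := 2 ^ N * ∫ z, |ψ z|
  have hB : 0 ≤ B := by positivity
  have far (x : E) (hx : 2 * max 1 M < ‖x‖) : |hypersingularIntegral N ψ x| ≤ B * ‖x‖ ^ (-N) :=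
    abs_hypersingularIntegral_le_of_norm_lt (M := M)
      (hψ.continuous.integrable_of_hasCompactSupport hc) (fun z hz => hM z hz.le) hN0
      (by linarith) (by linarith [le_max_right 1 M])
  refine ⟨A * (3 * max 1 M) ^ N + B * 2 ^ N, by positivity, fun x => ?_⟩
  refine (le_mul_add_rpow_neg hR (norm_nonneg x) hN0 hA hB (fun _ => near x) (far x)).trans ?_
  gcongr (A * (3 * max 1 M) ^ N + B * 2 ^ N) * ?_
  exact Real.rpow_le_rpow_of_nonpos (by positivity) (by linarith [le_max_left 1 M])
    (neg_nonpos.2 hN0)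

section Fubini

variable (hN : finrank ℝ E < N) (hN2 : N < finrank ℝ E + 2)
  (hf : AEStronglyMeasurable f) (hψ : Continuous ψ)
  (hint : ∀ h, Integrable fun z => f z * secondDiff ψ (x - z) h)
  (hD : ∀ h, ∫ z, |f z * secondDiff ψ (x - z) h| ≤ D * min 1 (‖h‖ ^ 2))

include hN hN2 hf hψ hint hD

theorem integrable_prod_rpow_neg_mul_secondDiff :
    Integrable (fun p : E × E => f p.1 * (‖p.2‖ ^ (-N) * (secondDiff ψ (x - p.1) p.2 / 2)))
      (volume.prod volume) := by
  have meas : AEStronglyMeasurable (fun p : E × E =>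
      f p.1 * (‖p.2‖ ^ (-N) * (secondDiff ψ (x - p.1) p.2 / 2))) (volume.prod volume) := by
    refine hf.comp_fst.mul (Measurable.aestronglyMeasurable ?_)
    unfold secondDiff
    fun_prop
  have integrand_eq (z h : E) : f z * (‖h‖ ^ (-N) * (secondDiff ψ (x - z) h / 2)) =
      ‖h‖ ^ (-N) / 2 * (f z * secondDiff ψ (x - z) h) := by ring
  refine (integrable_prod_iff' meas).2 ⟨ae_of_all _ fun h => ?_, ?_⟩
  · simp only [integrand_eq]
    exact (hint h).const_mul _
  · refine ((integrable_min_one_norm_sq_mul_rpow_neg hN hN2).const_mul (D / 2)).mono'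
      meas.norm.prod_swap.integral_prod_right' (ae_of_all _ fun h => ?_)
    rw [Real.norm_of_nonneg (integral_nonneg fun z => norm_nonneg _)]
    simp only [integrand_eq, norm_mul (‖h‖ ^ (-N) / 2), integral_const_mul]
    rw [Real.norm_of_nonneg (by positivity)]
    calc ‖h‖ ^ (-N) / 2 * ∫ z, ‖f z * secondDiff ψ (x - z) h‖
        ≤ ‖h‖ ^ (-N) / 2 * (D * min 1 (‖h‖ ^ 2)) := by gcongr; exact hD h
      _ = D / 2 * (min 1 (‖h‖ ^ 2) * ‖h‖ ^ (-N)) := by ring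

theorem integrable_mul_hypersingularIntegral :
    Integrable (fun z => f z * hypersingularIntegral N ψ (x - z)) := by
  simpa only [integral_const_mul, hypersingularIntegral] using
    (integrable_prod_rpow_neg_mul_secondDiff hN hN2 hf hψ hint hD).integral_prod_left

theorem integral_mul_hypersingularIntegral (hfψ : ConvolutionExists f ψ (lsmul ℝ ℝ) volume) :
    ∫ z, f z * hypersingularIntegral N ψ (x - z) = hypersingularIntegral N (f ⋆ ψ) x := by
  calc ∫ z, f z * hypersingularIntegral N ψ (x - z)
      = ∫ z, ∫ h, f z * (‖h‖ ^ (-N) * (secondDiff ψ (x - z) h / 2)) := by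
        simp only [hypersingularIntegral, integral_const_mul]
    _ = ∫ h, ∫ z, f z * (‖h‖ ^ (-N) * (secondDiff ψ (x - z) h / 2)) :=
        integral_integral_swap (integrable_prod_rpow_neg_mul_secondDiff hN hN2 hf hψ hint hD)
    _ = hypersingularIntegral N (f ⋆ ψ) x := by
        simp only [hypersingularIntegral, secondDiff_convolution hfψ, ← integral_div,
          ← integral_const_mul]
        congr! 4
        ring

end Fubini

end HypersingularIntegral

section FractionalLaplacian

variable {d : ℕ} {s ε A D R : ℝ} {f : Ed d → ℝ}

theorem fracLapTrunc_eq_setIntegral_sub (d : ℕ) (s : ℝ) (f : Ed d → ℝ) (x : Ed d) (ε : ℝ) :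
    fracLapTrunc d s f x ε =
      ∫ h in {h | ε ≤ ‖h‖}, ‖h‖ ^ (-((d : ℝ) + 2 * s)) * (f x - f (x - h)) := by
  rw [fracLapTrunc, ← integral_indicator (measurableSet_le measurable_const (by fun_prop)),
    ← integral_indicator (measurableSet_le measurable_const measurable_norm),
    ← integral_sub_left_eq_self _ volume x]
  congr 1
  ext h
  simp only [indicator, mem_ofPred_eq, dist_self_sub_right]
  congr 1
  rw [Real.rpow_neg (norm_nonneg _), div_eq_inv_mul]

theorem fracLapTrunc_eq_setIntegral_secondDiff (hs : 0 < s) (hε : 0 < ε) (hf : Measurable f)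
    (hA : ∀ x, |f x| ≤ A) (x : Ed d) :
    fracLapTrunc d s f x ε =
      ∫ h in {h | ε ≤ ‖h‖}, ‖h‖ ^ (-((d : ℝ) + 2 * s)) * (secondDiff f x h / 2) := by
  have hset : MeasurableSet {h : Ed d | ε ≤ ‖h‖} :=
    measurableSet_le measurable_const measurable_norm
  have int_sub : IntegrableOn (fun h => ‖h‖ ^ (-((d : ℝ) + 2 * s)) * (f x - f (x - h)))
      {h | ε ≤ ‖h‖} := by
    refine (integrableOn_norm_rpow_neg_setOf_le ?_ hε).mul_bdd (c := A + A)
      (Measurable.aestronglyMeasurable (by fun_prop))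
      (ae_of_all _ fun h => (abs_sub _ _).trans (add_le_add (hA _) (hA _)))
    rw [finrank_euclideanSpace_fin]
    linarith
  have reflect : fracLapTrunc d s f x ε =
      ∫ h in {h | ε ≤ ‖h‖}, ‖h‖ ^ (-((d : ℝ) + 2 * s)) * (f x - f (x + h)) := by
    rw [fracLapTrunc_eq_setIntegral_sub, ← integral_indicator hset, ← integral_indicator hset,
      ← integral_neg_eq_self]
    simp only [indicator, mem_ofPred_eq, norm_neg, sub_neg_eq_add]
  have int_add : IntegrableOn (fun h => ‖h‖ ^ (-((d : ℝ) + 2 * s)) * (f x - f (x + h)))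
      {h | ε ≤ ‖h‖} := by
    refine (integrableOn_norm_rpow_neg_setOf_le ?_ hε).mul_bdd (c := A + A)
      (Measurable.aestronglyMeasurable (by fun_prop))
      (ae_of_all _ fun h => (abs_sub _ _).trans (add_le_add (hA _) (hA _)))
    rw [finrank_euclideanSpace_fin]
    linarith
  calc fracLapTrunc d s f x ε = (fracLapTrunc d s f x ε + fracLapTrunc d s f x ε) / 2 := by ring
    _ = _ := by
      nth_rw 1 [fracLapTrunc_eq_setIntegral_sub]
      rw [reflect, ← integral_add int_sub int_add, ← integral_div]
      simp only [secondDiff]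
      congr! 2
      ring

theorem aecover_setOf_le_norm {E : Type*} [NormedAddCommGroup E] [MeasurableSpace E]
    [OpensMeasurableSpace E] {μ : Measure E} [NullSingletonClass μ] :
    AECover μ (𝓝[>] (0 : ℝ)) fun ε => {h : E | ε ≤ ‖h‖} where
  ae_eventually_mem := by
    filter_upwards [μ.ae_ne 0] with h hh
    filter_upwards [nhdsWithin_le_nhds (Iio_mem_nhds (norm_pos_iff.2 hh))] with ε hε
    exact hε.le
  measurableSet ε := measurableSet_le measurable_const measurable_norm

theorem fracLap_eq_hypersingularIntegral [NeZero d] (hs : s ∈ Ioo 0 1) (C : ℝ)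
    (hf : Measurable f) (hA : ∀ x, |f x| ≤ A) (hR : 0 < R) {x : Ed d}
    (hD : ∀ h, |secondDiff f x h| ≤ D * min 1 (‖R⁻¹ • h‖ ^ 2)) :
    fracLap d s C f x = C * hypersingularIntegral (d + 2 * s) f x := by
  have int : Integrable fun h => ‖h‖ ^ (-((d : ℝ) + 2 * s)) * (secondDiff f x h / 2) :=
    integrable_rpow_neg_mul_secondDiff (by rw [finrank_euclideanSpace_fin]; linarith [hs.1])
      (by rw [finrank_euclideanSpace_fin]; linarith [hs.2]) hf hR hD
  have tendsto_trunc : Tendsto (fracLapTrunc d s f x) (𝓝[>] 0)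
      (𝓝 (hypersingularIntegral (d + 2 * s) f x)) := by
    refine (aecover_setOf_le_norm.integral_tendsto_of_countably_generated int).congr' ?_
    filter_upwards [self_mem_nhdsWithin] with ε hε
    exact (fracLapTrunc_eq_setIntegral_secondDiff hs.1 hε hf hA x).symm
  rw [fracLap, tendsto_trunc.limUnder_eq]

end FractionalLaplacian

section RadialCutoff

/-- A smooth even cutoff on the line: positive on `(-1, 1)`, zero outside. -/
noncomputable def radialCutoff (t : ℝ) : ℝ :=
  Real.smoothTransition (1 - t ^ 2)

theorem contDiff_radialCutoff_norm {E : Type*} [NormedAddCommGroup E] [InnerProductSpace ℝ E] :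
    ContDiff ℝ 2 fun z : E => radialCutoff ‖z‖ :=
  Real.smoothTransition.contDiff (n := 2) |>.comp (contDiff_const.sub (contDiff_norm_sq ℝ))

theorem continuous_radialCutoff : Continuous radialCutoff :=
  Real.smoothTransition.continuous.comp (by fun_prop)

theorem radialCutoff_nonneg (t : ℝ) : 0 ≤ radialCutoff t :=
  Real.smoothTransition.nonneg _

theorem abs_radialCutoff_le_one (t : ℝ) : |radialCutoff t| ≤ 1 :=
  (abs_of_nonneg (radialCutoff_nonneg t)).trans_le (Real.smoothTransition.le_one _)

theorem radialCutoff_eq_zero {t : ℝ} (ht : 1 ≤ |t|) : radialCutoff t = 0 :=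
  Real.smoothTransition.zero_of_nonpos (sub_nonpos.2 ((one_le_sq_iff_one_le_abs t).2 ht))

theorem hasCompactSupport_radialCutoff_norm {E : Type*} [NormedAddCommGroup E] [ProperSpace E] :
    HasCompactSupport fun z : E => radialCutoff ‖z‖ :=
  HasCompactSupport.intro (isCompact_closedBall 0 1) fun z hz => by
    rw [mem_closedBall_zero_iff, not_le] at hz
    exact radialCutoff_eq_zero (by rw [abs_norm]; exact hz.le)

/-- The Mellin transform `∫₀ᵗ uᵃ⁻¹ χ(u) du` of the cutoff `χ`, truncated at `t`. -/
noncomputable def cutoffMellin (a t : ℝ) : ℝ :=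
  ∫ u in (0 : ℝ)..t, u ^ (a - 1) * radialCutoff u

variable {a r s t : ℝ}

theorem intervalIntegrable_rpow_mul_radialCutoff (ha : 0 < a) (r s t : ℝ) :
    IntervalIntegrable (fun u => u ^ (a - 1) * radialCutoff (u * r)) volume s t :=
  (intervalIntegral.intervalIntegrable_rpow' (by linarith)).mul_continuousOn
    (continuous_radialCutoff.comp (by fun_prop)).continuousOn

theorem cutoffMellin_sub_cutoffMellin (ha : 0 < a) (s t : ℝ) :
    cutoffMellin a t - cutoffMellin a s = ∫ u in s..t, u ^ (a - 1) * radialCutoff u := by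
  have int (s t : ℝ) : IntervalIntegrable (fun u => u ^ (a - 1) * radialCutoff u) volume s t := by
    simpa only [mul_one] using intervalIntegrable_rpow_mul_radialCutoff ha 1 s t
  exact intervalIntegral.integral_interval_sub_left (int 0 t) (int 0 s)

theorem cutoffMellin_mono (ha : 0 < a) (hs : 0 ≤ s) (hst : s ≤ t) :
    cutoffMellin a s ≤ cutoffMellin a t := by
  rw [← sub_nonneg, cutoffMellin_sub_cutoffMellin ha]
  exact intervalIntegral.integral_nonneg hst fun u hu =>
    mul_nonneg (Real.rpow_nonneg (hs.trans hu.1) _) (radialCutoff_nonneg u)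

theorem cutoffMellin_eq_of_one_le (ha : 0 < a) (ht : 1 ≤ t) :
    cutoffMellin a t = cutoffMellin a 1 := by
  rw [← sub_eq_zero, cutoffMellin_sub_cutoffMellin ha, ← intervalIntegral.integral_zero]
  refine intervalIntegral.integral_congr fun u hu => ?_
  rw [uIcc_of_le ht] at hu
  simp only [radialCutoff_eq_zero (hu.1.trans (le_abs_self u)), mul_zero]

theorem cutoffMellin_nonneg (ht : 0 ≤ t) : 0 ≤ cutoffMellin a t :=
  intervalIntegral.integral_nonneg ht fun u hu =>
    mul_nonneg (Real.rpow_nonneg hu.1 _) (radialCutoff_nonneg u)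

theorem cutoffMellin_one_pos (ha : 0 < a) : 0 < cutoffMellin a 1 := by
  refine intervalIntegral.intervalIntegral_pos_of_pos_on
    (by simpa only [mul_one] using intervalIntegrable_rpow_mul_radialCutoff ha 1 0 1)
    (fun u hu => ?_) one_pos
  have : 0 < 1 - u ^ 2 := by nlinarith [hu.1, hu.2]
  exact mul_pos (Real.rpow_pos_of_pos hu.1 _) (Real.smoothTransition.pos_of_pos this)

theorem cutoffMellin_le (ha : 0 < a) (ht : 0 ≤ t) : cutoffMellin a t ≤ cutoffMellin a 1 := by
  rcases le_total t 1 with h | h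
  · exact cutoffMellin_mono ha ht h
  · exact (cutoffMellin_eq_of_one_le ha h).le

theorem integral_rpow_mul_radialCutoff_mul (a : ℝ) (hr : 0 < r) (ht : 0 ≤ t) :
    ∫ u in (0 : ℝ)..t, u ^ (a - 1) * radialCutoff (u * r) =
      r ^ (-a) * cutoffMellin a (t * r) := by
  have rpow_scale : EqOn (fun u => u ^ (a - 1) * radialCutoff (u * r))
      (fun u => r ^ (-a) * (r * ((u * r) ^ (a - 1) * radialCutoff (u * r)))) (uIcc 0 t) := by
    intro u hu
    rw [uIcc_of_le ht] at hu
    have : r ^ (-a) * (r * r ^ (a - 1)) = 1 := by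
      rw [mul_comm r, Real.rpow_sub_one hr.ne', div_mul_cancel₀ _ hr.ne', ← Real.rpow_add hr,
        neg_add_cancel, Real.rpow_zero]
    simp only [Real.mul_rpow hu.1 hr.le]
    linear_combination -(u ^ (a - 1) * radialCutoff (u * r)) * this
  rw [intervalIntegral.integral_congr rpow_scale, intervalIntegral.integral_const_mul,
    intervalIntegral.integral_const_mul,
    intervalIntegral.mul_integral_comp_mul_right (f := fun u => u ^ (a - 1) * radialCutoff u),
    zero_mul, cutoffMellin]

theorem abs_integral_rpow_mul_le (ha : 0 < a) (ht : 0 ≤ t) {g : ℝ → ℝ} {A : ℝ}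
    (hg : ∀ u ∈ Icc 0 t, |g u| ≤ A) :
    |∫ u in (0 : ℝ)..t, u ^ (a - 1) * g u| ≤ A * (t ^ a / a) := by
  have int : IntervalIntegrable (fun u : ℝ => u ^ (a - 1)) volume 0 t :=
    intervalIntegral.intervalIntegrable_rpow' (by linarith)
  calc |∫ u in (0 : ℝ)..t, u ^ (a - 1) * g u| ≤ ∫ u in (0 : ℝ)..t, A * u ^ (a - 1) := by
        rw [← Real.norm_eq_abs]
        refine intervalIntegral.norm_integral_le_of_norm_le ht (ae_of_all _ fun u hu => ?_)
          (int.const_mul A)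
        rw [norm_mul, Real.norm_of_nonneg (Real.rpow_nonneg hu.1.le _), mul_comm]
        gcongr
        · exact Real.rpow_nonneg hu.1.le _
        · exact hg u ⟨hu.1.le, hu.2⟩
    _ = A * (t ^ a / a) := by
        rw [intervalIntegral.integral_const_mul, integral_rpow (Or.inl (by linarith)),
          sub_add_cancel, Real.zero_rpow ha.ne', sub_zero]

end RadialCutoff

section RieszSplitting

/-- The far part of the Riesz kernel `‖z‖⁻ᵃ` at scale `R`: the part over `τ < 1 / R` of the
superposition `‖z‖⁻ᵃ = c⁻¹ ∫₀^∞ τᵃ⁻¹ χ(τ ‖z‖) dτ` of dilates of a smooth cutoff `χ`. -/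
noncomputable def rieszTail {E : Type*} [Norm E] (a R : ℝ) (z : E) : ℝ :=
  (cutoffMellin a 1)⁻¹ * ∫ τ in (0 : ℝ)..R⁻¹, τ ^ (a - 1) * radialCutoff (τ * ‖z‖)

/-- The near part of the Riesz kernel `‖z‖⁻ᵃ` at scale `R`: what remains after removing
`rieszTail`. -/
noncomputable def rieszTrunc {E : Type*} [Norm E] (a R : ℝ) (z : E) : ℝ :=
  ‖z‖ ^ (-a) - rieszTail a R z

variable {E : Type*} [NormedAddCommGroup E] {a R : ℝ} {z : E}

theorem rieszTail_eq (hR : 0 ≤ R) (hz : z ≠ 0) :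
    rieszTail a R z = (cutoffMellin a 1)⁻¹ * (‖z‖ ^ (-a) * cutoffMellin a (R⁻¹ * ‖z‖)) := by
  rw [rieszTail, integral_rpow_mul_radialCutoff_mul a (norm_pos_iff.2 hz) (inv_nonneg.2 hR)]

theorem rieszTrunc_nonneg (ha : 0 < a) (hR : 0 ≤ R) (hz : z ≠ 0) : 0 ≤ rieszTrunc a R z := by
  rw [rieszTrunc, rieszTail_eq hR hz, sub_nonneg, mul_left_comm]
  refine mul_le_of_le_one_right (by positivity) ?_
  rw [inv_mul_le_one₀ (cutoffMellin_one_pos ha)]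
  exact cutoffMellin_le ha (by positivity)

theorem rieszTrunc_le (ha : 0 < a) (hR : 0 ≤ R) (hz : z ≠ 0) : rieszTrunc a R z ≤ ‖z‖ ^ (-a) := by
  rw [rieszTrunc, rieszTail_eq hR hz]
  have := cutoffMellin_one_pos ha
  have : 0 ≤ cutoffMellin a (R⁻¹ * ‖z‖) := cutoffMellin_nonneg (by positivity)
  exact sub_le_self _ (by positivity)

theorem abs_rieszTrunc_le (ha : 0 < a) (hR : 0 ≤ R) (hz : z ≠ 0) :
    |rieszTrunc a R z| ≤ ‖z‖ ^ (-a) :=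
  (abs_of_nonneg (rieszTrunc_nonneg ha hR hz)).trans_le (rieszTrunc_le ha hR hz)

theorem rieszTrunc_eq_zero (ha : 0 < a) (hR : 0 < R) (hz : R ≤ ‖z‖) : rieszTrunc a R z = 0 := by
  have hz0 : z ≠ 0 := norm_pos_iff.1 (hR.trans_le hz)
  have one_le : 1 ≤ R⁻¹ * ‖z‖ := by rwa [← div_eq_inv_mul, one_le_div hR]
  rw [rieszTrunc, rieszTail_eq hR.le hz0, cutoffMellin_eq_of_one_le ha one_le, mul_left_comm,
    inv_mul_cancel₀ (cutoffMellin_one_pos ha).ne', mul_one, sub_self]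

theorem abs_rieszTrunc_le_indicator (ha : 0 < a) (hR : 0 < R) (hz : z ≠ 0) :
    |rieszTrunc a R z| ≤ (ball 0 R).indicator (fun z => ‖z‖ ^ (-a)) z := by
  by_cases hzR : z ∈ ball 0 R
  · rw [indicator_of_mem hzR]
    exact abs_rieszTrunc_le ha hR.le hz
  · rw [indicator_of_notMem hzR, rieszTrunc_eq_zero ha hR (by simpa using hzR), abs_zero]

theorem abs_rieszTail_le (ha : 0 < a) (hR : 0 ≤ R) (z : E) :
    |rieszTail a R z| ≤ (cutoffMellin a 1)⁻¹ / a * R ^ (-a) := by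
  have hc := cutoffMellin_one_pos ha
  rw [rieszTail, abs_mul, abs_of_pos (inv_pos.2 hc)]
  calc (cutoffMellin a 1)⁻¹ * |∫ τ in (0 : ℝ)..R⁻¹, τ ^ (a - 1) * radialCutoff (τ * ‖z‖)|
      ≤ (cutoffMellin a 1)⁻¹ * (1 * (R⁻¹ ^ a / a)) := by
        gcongr
        exact abs_integral_rpow_mul_le ha (inv_nonneg.2 hR) fun τ _ => abs_radialCutoff_le_one _
    _ = (cutoffMellin a 1)⁻¹ / a * R ^ (-a) := by
        rw [Real.inv_rpow hR, Real.rpow_neg hR]; ring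

theorem secondDiff_rieszTail [NormedSpace ℝ E] (ha : 0 < a) (hR : 0 ≤ R) (z h : E) :
    secondDiff (rieszTail a R) z h = (cutoffMellin a 1)⁻¹ *
      ∫ τ in (0 : ℝ)..R⁻¹, τ ^ (a - 1) *
        secondDiff (fun y : E => radialCutoff ‖y‖) (τ • z) (τ • h) := by
  have int (y : E) := intervalIntegrable_rpow_mul_radialCutoff ha ‖y‖ 0 R⁻¹
  have integrand_eq : EqOn
      (fun τ : ℝ => τ ^ (a - 1) * secondDiff (fun y : E => radialCutoff ‖y‖) (τ • z) (τ • h))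
      (fun τ => 2 * (τ ^ (a - 1) * radialCutoff (τ * ‖z‖)) -
        τ ^ (a - 1) * radialCutoff (τ * ‖z - h‖) - τ ^ (a - 1) * radialCutoff (τ * ‖z + h‖))
      (uIcc 0 R⁻¹) := by
    intro τ hτ
    rw [uIcc_of_le (inv_nonneg.2 hR)] at hτ
    simp only [secondDiff, ← smul_sub, ← smul_add, norm_smul, Real.norm_of_nonneg hτ.1]
    ring
  rw [intervalIntegral.integral_congr integrand_eq,
    intervalIntegral.integral_sub (((int z).const_mul 2).sub (int (z - h))) (int (z + h)),
    intervalIntegral.integral_sub ((int z).const_mul 2) (int (z - h)),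
    intervalIntegral.integral_const_mul]
  simp only [secondDiff, rieszTail]
  ring

theorem measurable_rieszTail [MeasurableSpace E] [OpensMeasurableSpace E] (hR : 0 ≤ R) :
    Measurable (rieszTail a R : E → ℝ) := by
  have meas : StronglyMeasurable fun p : E × ℝ => p.2 ^ (a - 1) * radialCutoff (p.2 * ‖p.1‖) :=
    Measurable.stronglyMeasurable <| (measurable_snd.pow_const _).mul
      (continuous_radialCutoff.measurable.comp (measurable_snd.mul measurable_fst.norm))
  unfold rieszTail
  simp only [intervalIntegral.integral_of_le (inv_nonneg.2 hR)]
  exact meas.integral_prod_right'.measurable.const_mul _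

theorem measurable_rieszTrunc [MeasurableSpace E] [OpensMeasurableSpace E] (hR : 0 ≤ R) :
    Measurable (rieszTrunc a R : E → ℝ) :=
  (measurable_norm.pow_const _).sub (measurable_rieszTail hR)

variable (E) in
theorem exists_abs_secondDiff_rieszTail_le [InnerProductSpace ℝ E] [FiniteDimensional ℝ E]
    (ha : 0 < a) : ∃ D, 0 ≤ D ∧ ∀ R : ℝ, 0 ≤ R → ∀ z h : E,
      |secondDiff (rieszTail a R) z h| ≤ D * R ^ (-a) * min 1 (‖R⁻¹ • h‖ ^ 2) := by
  obtain ⟨D, hD0, hD⟩ := exists_abs_secondDiff_le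
    (contDiff_radialCutoff_norm (E := E)) hasCompactSupport_radialCutoff_norm
  have hc := cutoffMellin_one_pos ha
  refine ⟨(cutoffMellin a 1)⁻¹ / a * D, by positivity, fun R hR z h => ?_⟩
  have dilate_le (τ : ℝ) (hτ : τ ∈ Icc 0 R⁻¹) :
      |secondDiff (fun y : E => radialCutoff ‖y‖) (τ • z) (τ • h)| ≤
        D * min 1 (‖R⁻¹ • h‖ ^ 2) := by
    refine (hD _ _).trans ?_
    rw [norm_smul, norm_smul, Real.norm_of_nonneg hτ.1, Real.norm_of_nonneg (inv_nonneg.2 hR)]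
    have := hτ.1
    gcongr
    exact hτ.2
  rw [secondDiff_rieszTail ha hR, abs_mul, abs_of_pos (inv_pos.2 hc)]
  calc (cutoffMellin a 1)⁻¹ * |∫ τ in (0 : ℝ)..R⁻¹, τ ^ (a - 1) *
        secondDiff (fun y : E => radialCutoff ‖y‖) (τ • z) (τ • h)|
      ≤ (cutoffMellin a 1)⁻¹ * (D * min 1 (‖R⁻¹ • h‖ ^ 2) * (R⁻¹ ^ a / a)) := by
        gcongr
        exact abs_integral_rpow_mul_le ha (inv_nonneg.2 hR) dilate_le
    _ = (cutoffMellin a 1)⁻¹ / a * D * R ^ (-a) * min 1 (‖R⁻¹ • h‖ ^ 2) := by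
        rw [Real.inv_rpow hR, Real.rpow_neg hR]; ring

variable [NormedSpace ℝ E] [FiniteDimensional ℝ E] [MeasurableSpace E] [BorelSpace E]
  {μ : Measure E} [μ.IsAddHaarMeasure]

open scoped Pointwise in
theorem setIntegral_ball_norm_rpow_neg (a : ℝ) (hR : 0 < R) :
    ∫ z in ball (0 : E) R, ‖z‖ ^ (-a) ∂μ =
      R ^ (finrank ℝ E - a) * ∫ z in ball (0 : E) 1, ‖z‖ ^ (-a) ∂μ := by
  have scaling := Measure.setIntegral_comp_smul_of_pos μ (fun z : E => ‖z‖ ^ (-a)) (ball 0 1) hR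
  simp only [norm_smul, Real.norm_of_nonneg hR.le, Real.mul_rpow hR.le (norm_nonneg _),
    integral_const_mul, smul_unitBall_of_pos hR, smul_eq_mul] at scaling
  rw [sub_eq_add_neg, Real.rpow_add hR, Real.rpow_natCast, mul_assoc, scaling,
    mul_inv_cancel_left₀ (by positivity)]

variable [Nontrivial E]

theorem integrableOn_norm_rpow_neg_ball (haE : a < finrank ℝ E) (R : ℝ) :
    IntegrableOn (fun z : E => ‖z‖ ^ (-a)) (ball 0 R) μ :=
  ((locallyIntegrable_norm_rpow_neg haE).integrableOn_isCompact
    (isCompact_closedBall 0 R)).mono_set ball_subset_closedBall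

theorem integrable_rieszTrunc (ha : 0 < a) (haE : a < finrank ℝ E) (hR : 0 < R) :
    Integrable (rieszTrunc a R : E → ℝ) μ := by
  refine ((integrableOn_norm_rpow_neg_ball haE R).integrable_indicator measurableSet_ball).mono'
    (measurable_rieszTrunc hR.le).aestronglyMeasurable ?_
  filter_upwards [μ.ae_ne 0] with z hz
  exact abs_rieszTrunc_le_indicator ha hR hz

theorem integral_abs_rieszTrunc_le (ha : 0 < a) (haE : a < finrank ℝ E) (hR : 0 < R) :
    ∫ z, |rieszTrunc a R z| ∂μ ≤
      R ^ (finrank ℝ E - a) * ∫ z in ball (0 : E) 1, ‖z‖ ^ (-a) ∂μ := by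
  rw [← setIntegral_ball_norm_rpow_neg a hR, ← integral_indicator measurableSet_ball]
  refine integral_mono_ae (integrable_rieszTrunc ha haE hR).abs
    ((integrableOn_norm_rpow_neg_ball haE R).integrable_indicator measurableSet_ball) ?_
  filter_upwards [μ.ae_ne 0] with z hz
  exact abs_rieszTrunc_le_indicator ha hR hz

end RieszSplitting

section RieszPotential

theorem tendsto_rieszTail_atTop {E : Type*} [NormedAddCommGroup E] {a : ℝ} (ha : 0 < a)
    (z : E) :
    Tendsto (fun R => rieszTail a R z) atTop (𝓝 0) := by
  refine squeeze_zero_norm' (a := fun R => (cutoffMellin a 1)⁻¹ / a * R ^ (-a)) ?_ ?_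
  · filter_upwards [eventually_ge_atTop 0] with R hR
    exact abs_rieszTail_le ha hR z
  · simpa only [mul_zero] using (tendsto_rpow_neg_atTop ha).const_mul ((cutoffMellin a 1)⁻¹ / a)

variable {E : Type*} [NormedAddCommGroup E] [NormedSpace ℝ E] [FiniteDimensional ℝ E]
  [MeasurableSpace E] [BorelSpace E] {μ : Measure E} [μ.IsAddHaarMeasure] [Nontrivial E]
  {a : ℝ} {V ψ : E → ℝ}

theorem convolutionExists_norm_rpow_neg (haE : a < finrank ℝ E) (hψ : Continuous ψ)
    (hc : HasCompactSupport ψ) :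
    ConvolutionExists (fun z : E => ‖z‖ ^ (-a)) ψ (lsmul ℝ ℝ) μ :=
  hc.convolutionExists_right _ (locallyIntegrable_norm_rpow_neg haE) hψ

theorem continuous_norm_rpow_neg_convolution (haE : a < finrank ℝ E) (hψ : Continuous ψ)
    (hc : HasCompactSupport ψ) :
    Continuous ((fun z : E => ‖z‖ ^ (-a)) ⋆[lsmul ℝ ℝ, μ] ψ) :=
  hc.continuous_convolution_right _ (locallyIntegrable_norm_rpow_neg haE) hψ

theorem exists_abs_norm_rpow_neg_convolution_le (ha : 0 ≤ a) (haE : a < finrank ℝ E)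
    (hψ : Continuous ψ) (hc : HasCompactSupport ψ) :
    ∃ C, 0 ≤ C ∧ ∀ x,
      |((fun z : E => ‖z‖ ^ (-a)) ⋆[lsmul ℝ ℝ, μ] ψ) x| ≤ C * (1 + ‖x‖) ^ (-a) := by
  obtain ⟨M, -, hM⟩ := hc.exists_pos_le_norm
  have hR : 0 < max 1 M := lt_max_of_lt_left one_pos
  obtain ⟨A, hA⟩ := (isCompact_closedBall (0 : E) (2 * max 1 M)).exists_bound_of_continuousOn
    (continuous_norm_rpow_neg_convolution (μ := μ) haE hψ hc).continuousOn
  have hA0 : 0 ≤ A := (norm_nonneg _).trans (hA 0 (mem_closedBall_self (by positivity)))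
  set B := 2 ^ a * ∫ z, |ψ z| ∂μ
  have hB : 0 ≤ B := by positivity
  have far (x : E) (hx : 2 * max 1 M < ‖x‖) :
      |((fun z : E => ‖z‖ ^ (-a)) ⋆[lsmul ℝ ℝ, μ] ψ) x| ≤ B * ‖x‖ ^ (-a) := by
    have hx0 : 0 < ‖x‖ := by linarith
    simp only [convolution_lsmul_swap, smul_eq_mul, mul_comm (‖_‖ ^ (-a))]
    refine (norm_integral_mul_le_of_le_rpow_neg (M := M) (B := 1) (m := a)
      (k := fun z => ‖z‖ ^ (-a)) (μ := μ)
      (hψ.integrable_of_hasCompactSupport hc) (fun z hz => hM z hz.le) ha zero_le_one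
      (fun y _ => ?_) hx0 (by linarith [le_max_right 1 M])).trans_eq ?_
    · rw [one_mul, abs_of_nonneg (by positivity)]
    · rw [Real.div_rpow hx0.le zero_le_two, Real.rpow_neg zero_le_two, div_inv_eq_mul]
      simp only [B]
      ring
  refine ⟨A * (3 * max 1 M) ^ a + B * 2 ^ a, by positivity, fun x => ?_⟩
  refine (le_mul_add_rpow_neg hR (norm_nonneg x) ha hA0 hB
    (fun hx => hA x (by simpa using hx)) (far x)).trans ?_
  gcongr (A * (3 * max 1 M) ^ a + B * 2 ^ a) * ?_
  exact Real.rpow_le_rpow_of_nonpos (by positivity) (by linarith [le_max_left 1 M])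
    (neg_nonpos.2 ha)

theorem norm_rieszTrunc_mul_le (ha : 0 < a) {R : ℝ} (hR : 0 ≤ R) (x : E) :
    ∀ᵐ z ∂μ, ‖rieszTrunc a R z * ψ (x - z)‖ ≤ ‖z‖ ^ (-a) * |ψ (x - z)| := by
  filter_upwards [μ.ae_ne 0] with z hz
  rw [norm_mul]
  exact mul_le_mul_of_nonneg_right (abs_rieszTrunc_le ha hR hz) (norm_nonneg _)

theorem abs_rieszTrunc_convolution_le (ha : 0 < a) (haE : a < finrank ℝ E) (hψ : Continuous ψ)
    (hc : HasCompactSupport ψ) {R : ℝ} (hR : 0 ≤ R) (x : E) :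
    |(rieszTrunc a R ⋆[lsmul ℝ ℝ, μ] ψ) x| ≤
      ((fun z : E => ‖z‖ ^ (-a)) ⋆[lsmul ℝ ℝ, μ] fun z => |ψ z|) x := by
  rw [convolution_lsmul, convolution_lsmul, ← Real.norm_eq_abs]
  exact norm_integral_le_of_norm_le (convolutionExists_norm_rpow_neg haE hψ.abs hc.norm x)
    (norm_rieszTrunc_mul_le ha hR x)

theorem tendsto_rieszTrunc_convolution (ha : 0 < a) (haE : a < finrank ℝ E) (hψ : Continuous ψ)
    (hc : HasCompactSupport ψ) (x : E) :
    Tendsto (fun R => (rieszTrunc a R ⋆[lsmul ℝ ℝ, μ] ψ) x) atTop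
      (𝓝 (((fun z : E => ‖z‖ ^ (-a)) ⋆[lsmul ℝ ℝ, μ] ψ) x)) := by
  simp only [convolution_lsmul, smul_eq_mul]
  refine tendsto_integral_filter_of_dominated_convergence
    (fun z => ‖z‖ ^ (-a) * |ψ (x - z)|) ?_ ?_
    (convolutionExists_norm_rpow_neg haE hψ.abs hc.norm x) (ae_of_all _ fun z => ?_)
  · filter_upwards [eventually_ge_atTop 0] with R hR
    exact ((measurable_rieszTrunc hR).mul (by fun_prop)).aestronglyMeasurable
  · filter_upwards [eventually_ge_atTop 0] with R hR
    exact norm_rieszTrunc_mul_le ha hR x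
  · refine Tendsto.mul_const _ ?_
    simpa only [rieszTrunc, sub_zero] using (tendsto_rieszTail_atTop ha z).const_sub (‖z‖ ^ (-a))

theorem tendsto_integral_mul_rieszTrunc_convolution (ha : 0 < a) (haE : a < finrank ℝ E)
    (hψ : Continuous ψ) (hc : HasCompactSupport ψ) (hV : AEStronglyMeasurable V μ)
    (hVint : Integrable (fun x => |V x| * (1 + ‖x‖) ^ (-a)) μ) :
    Tendsto (fun R => ∫ x, V x * (rieszTrunc a R ⋆[lsmul ℝ ℝ, μ] ψ) x ∂μ) atTop
      (𝓝 (∫ x, V x * ((fun z : E => ‖z‖ ^ (-a)) ⋆[lsmul ℝ ℝ, μ] ψ) x ∂μ)) := by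
  obtain ⟨C, -, hC⟩ := exists_abs_norm_rpow_neg_convolution_le (μ := μ) ha.le haE hψ.abs hc.norm
  refine tendsto_integral_filter_of_dominated_convergence
    (fun x => C * (|V x| * (1 + ‖x‖) ^ (-a))) ?_ ?_ (hVint.const_mul C) (ae_of_all _ fun x =>
      (tendsto_rieszTrunc_convolution ha haE hψ hc x).const_mul (V x))
  · filter_upwards [eventually_gt_atTop 0] with R hR
    exact hV.mul (hc.continuous_convolution_right _
      (integrable_rieszTrunc ha haE hR).locallyIntegrable hψ).aestronglyMeasurable
  · filter_upwards [eventually_ge_atTop 0] with R hR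
    refine ae_of_all _ fun x => ?_
    rw [norm_mul, Real.norm_eq_abs, Real.norm_eq_abs, mul_left_comm]
    gcongr
    exact (abs_rieszTrunc_convolution_le ha haE hψ hc hR x).trans ((le_abs_self _).trans (hC x))

end RieszPotential

section TruncationError

section Convolution

variable {G : Type*} [AddCommGroup G] [MeasurableSpace G] [MeasurableAdd G] [MeasurableNeg G]
  {μ : Measure G} [μ.IsAddLeftInvariant] [μ.IsNegInvariant] {A B : ℝ} {f ψ : G → ℝ}

theorem convolutionExists_of_abs_le (hf : AEStronglyMeasurable f μ) (hA : ∀ z, |f z| ≤ A)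
    (hψ : Integrable ψ μ) : ConvolutionExists f ψ (lsmul ℝ ℝ) μ :=
  fun x => (hψ.comp_sub_left x).bdd_mul hf (ae_of_all _ hA)

theorem abs_secondDiff_convolution_le (hfψ : ConvolutionExists f ψ (lsmul ℝ ℝ) μ)
    (hψ : Integrable ψ μ) {h : G} (hB : ∀ z, |secondDiff f z h| ≤ B) (x : G) :
    |secondDiff (f ⋆[lsmul ℝ ℝ, μ] ψ) x h| ≤ B * ∫ z, |ψ z| ∂μ := by
  have flip_lsmul : (lsmul ℝ ℝ : ℝ →L[ℝ] ℝ →L[ℝ] ℝ).flip = lsmul ℝ ℝ := by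
    ext
    rfl
  have hψf : ConvolutionExists ψ f (lsmul ℝ ℝ) μ := fun x => by
    simpa only [flip_lsmul] using convolutionExistsAt_flip.2 (hfψ x)
  rw [← convolution_flip, flip_lsmul, secondDiff_convolution hψf, ← integral_const_mul,
    ← Real.norm_eq_abs]
  refine norm_integral_le_of_norm_le (hψ.abs.const_mul B) (ae_of_all _ fun z => ?_)
  rw [norm_mul, mul_comm]
  exact mul_le_mul_of_nonneg_right (hB _) (norm_nonneg _)

end Convolution

section FubiniBounds

theorem exists_integral_abs_mul_secondDiff_le_of_integrable {E : Type*} [NormedAddCommGroup E]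
    [NormedSpace ℝ E] [MeasurableSpace E] [BorelSpace E] {μ : Measure E} {f ψ : E → ℝ}
    (hf : Integrable f μ) (hψ : ContDiff ℝ 2 ψ) (hc : HasCompactSupport ψ) (x : E) :
    ∃ D, ∀ h, Integrable (fun z => f z * secondDiff ψ (x - z) h) μ ∧
      ∫ z, |f z * secondDiff ψ (x - z) h| ∂μ ≤ D * min 1 (‖h‖ ^ 2) := by
  obtain ⟨D, -, hD⟩ := exists_abs_secondDiff_le hψ hc
  refine ⟨(∫ z, |f z| ∂μ) * D, fun h => ⟨?_, ?_⟩⟩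
  · have := hψ.continuous
    exact hf.mul_bdd (Continuous.aestronglyMeasurable (by unfold secondDiff; fun_prop))
      (ae_of_all _ fun z => hD (x - z) h)
  · rw [mul_assoc, ← integral_mul_const]
    refine integral_mono_of_nonneg (ae_of_all _ fun z => abs_nonneg _) (hf.abs.mul_const _)
      (ae_of_all _ fun z => ?_)
    simp only [abs_mul]
    gcongr
    exact hD _ _

variable {E : Type*} [NormedAddCommGroup E] [NormedSpace ℝ E] [FiniteDimensional ℝ E]
  [MeasurableSpace E] [BorelSpace E] {μ : Measure E} [μ.IsAddHaarMeasure] {A : ℝ} {f ψ : E → ℝ}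

theorem exists_integral_abs_mul_secondDiff_le_of_abs_le (hf : AEStronglyMeasurable f μ)
    (hA : ∀ z, |f z| ≤ A) (hψ : ContDiff ℝ 2 ψ) (hc : HasCompactSupport ψ) (x : E) :
    ∃ D, ∀ h, Integrable (fun z => f z * secondDiff ψ (x - z) h) μ ∧
      ∫ z, |f z * secondDiff ψ (x - z) h| ∂μ ≤ D * min 1 (‖h‖ ^ 2) := by
  obtain ⟨D, hD⟩ := exists_integral_abs_secondDiff_le (μ := μ) hψ hc
  have int (h : E) : Integrable (fun z => secondDiff ψ (x - z) h) μ :=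
    (integrable_secondDiff (hψ.continuous.integrable_of_hasCompactSupport hc) h).comp_sub_left x
  refine ⟨A * D, fun h => ⟨(int h).bdd_mul hf (ae_of_all _ hA), ?_⟩⟩
  calc ∫ z, |f z * secondDiff ψ (x - z) h| ∂μ
      ≤ ∫ z, A * |secondDiff ψ (x - z) h| ∂μ := by
        refine integral_mono_of_nonneg (ae_of_all _ fun z => abs_nonneg _)
          ((int h).abs.const_mul _) (ae_of_all _ fun z => ?_)
        simp only [abs_mul]
        gcongr
        exact hA z
    _ = A * ∫ z, |secondDiff ψ z h| ∂μ := by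
        rw [integral_const_mul, integral_sub_left_eq_self (fun z => |secondDiff ψ z h|)]
    _ ≤ A * D * min 1 (‖h‖ ^ 2) := by
        rw [mul_assoc]
        exact mul_le_mul_of_nonneg_left (hD h) ((abs_nonneg _).trans (hA 0))

end FubiniBounds

variable {E : Type*} [NormedAddCommGroup E] [InnerProductSpace ℝ E] [FiniteDimensional ℝ E]
  [MeasureSpace E] [BorelSpace E] [(volume : Measure E).IsAddHaarMeasure] [Nontrivial E]
  {a N R : ℝ} {ψ : E → ℝ}

section Kernels

variable (ha : 0 < a) (hN : finrank ℝ E < N) (hN2 : N < finrank ℝ E + 2) (hR : 0 < R)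
  (hψ : ContDiff ℝ 2 ψ) (hc : HasCompactSupport ψ) (x : E)

include ha hN hN2 hR hψ hc

theorem integrable_rieszTrunc_mul_hypersingularIntegral (haE : a < finrank ℝ E) :
    Integrable (fun z => rieszTrunc a R z * hypersingularIntegral N ψ (x - z)) := by
  obtain ⟨D, hD⟩ := exists_integral_abs_mul_secondDiff_le_of_integrable
    (integrable_rieszTrunc (μ := volume) ha haE hR) hψ hc x
  exact integrable_mul_hypersingularIntegral hN hN2
    (measurable_rieszTrunc hR.le).aestronglyMeasurable hψ.continuous
    (fun h => (hD h).1) (fun h => (hD h).2)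

theorem integral_rieszTrunc_mul_hypersingularIntegral (haE : a < finrank ℝ E) :
    ∫ z, rieszTrunc a R z * hypersingularIntegral N ψ (x - z) =
      hypersingularIntegral N (rieszTrunc a R ⋆ ψ) x := by
  obtain ⟨D, hD⟩ := exists_integral_abs_mul_secondDiff_le_of_integrable
    (integrable_rieszTrunc (μ := volume) ha haE hR) hψ hc x
  exact integral_mul_hypersingularIntegral hN hN2
    (measurable_rieszTrunc hR.le).aestronglyMeasurable hψ.continuous
    (fun h => (hD h).1) (fun h => (hD h).2)
    (hc.convolutionExists_right _ (integrable_rieszTrunc ha haE hR).locallyIntegrable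
      hψ.continuous)

theorem integrable_rieszTail_mul_hypersingularIntegral :
    Integrable (fun z => rieszTail a R z * hypersingularIntegral N ψ (x - z)) := by
  obtain ⟨D, hD⟩ := exists_integral_abs_mul_secondDiff_le_of_abs_le (μ := volume)
    (measurable_rieszTail hR.le).aestronglyMeasurable (abs_rieszTail_le ha hR.le) hψ hc x
  exact integrable_mul_hypersingularIntegral hN hN2
    (measurable_rieszTail hR.le).aestronglyMeasurable hψ.continuous
    (fun h => (hD h).1) (fun h => (hD h).2)

theorem integral_rieszTail_mul_hypersingularIntegral :
    ∫ z, rieszTail a R z * hypersingularIntegral N ψ (x - z) =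
      hypersingularIntegral N (rieszTail a R ⋆ ψ) x := by
  obtain ⟨D, hD⟩ := exists_integral_abs_mul_secondDiff_le_of_abs_le (μ := volume)
    (measurable_rieszTail hR.le).aestronglyMeasurable (abs_rieszTail_le ha hR.le) hψ hc x
  exact integral_mul_hypersingularIntegral hN hN2
    (measurable_rieszTail hR.le).aestronglyMeasurable hψ.continuous
    (fun h => (hD h).1) (fun h => (hD h).2)
    (convolutionExists_of_abs_le (measurable_rieszTail hR.le).aestronglyMeasurable
      (abs_rieszTail_le ha hR.le) (hψ.continuous.integrable_of_hasCompactSupport hc))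

theorem integral_norm_rpow_neg_mul_hypersingularIntegral (haE : a < finrank ℝ E) :
    ∫ z, ‖z‖ ^ (-a) * hypersingularIntegral N ψ (x - z) =
      hypersingularIntegral N (rieszTrunc a R ⋆ ψ) x +
        hypersingularIntegral N (rieszTail a R ⋆ ψ) x := by
  rw [← integral_rieszTrunc_mul_hypersingularIntegral ha hN hN2 hR hψ hc x haE,
    ← integral_rieszTail_mul_hypersingularIntegral ha hN hN2 hR hψ hc x,
    ← integral_add (integrable_rieszTrunc_mul_hypersingularIntegral ha hN hN2 hR hψ hc x haE)
      (integrable_rieszTail_mul_hypersingularIntegral ha hN hN2 hR hψ hc x)]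
  simp only [rieszTrunc, ← add_mul, sub_add_cancel]

end Kernels

theorem exists_abs_hypersingularIntegral_rieszTail_convolution_le (ha : 0 < a)
    (hN : finrank ℝ E < N) (hN2 : N < finrank ℝ E + 2) (hψ : Integrable ψ) :
    ∃ A, 0 ≤ A ∧ ∀ R, 0 < R → ∀ x,
      |hypersingularIntegral N (rieszTail a R ⋆ ψ) x| ≤ A * R ^ (finrank ℝ E - a - N) := by
  obtain ⟨D, hD0, hD⟩ := exists_abs_secondDiff_rieszTail_le E ha
  refine ⟨D * (∫ z, |ψ z|) / 2 * ∫ h : E, min 1 (‖h‖ ^ 2) * ‖h‖ ^ (-N), ?_, fun R hR x => ?_⟩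
  · have : 0 ≤ ∫ h : E, min 1 (‖h‖ ^ 2) * ‖h‖ ^ (-N) := by positivity
    positivity
  · have hfψ : ConvolutionExists (rieszTail a R) ψ (lsmul ℝ ℝ) volume :=
      convolutionExists_of_abs_le (measurable_rieszTail hR.le).aestronglyMeasurable
        (abs_rieszTail_le ha hR.le) hψ
    refine (abs_hypersingularIntegral_le (D := D * R ^ (-a) * ∫ z, |ψ z|) hN hN2 hR
      fun h => ?_).trans_eq ?_
    · rw [mul_right_comm]
      exact abs_secondDiff_convolution_le hfψ hψ (fun z => hD R hR.le z h) x
    · rw [show finrank ℝ E - a - N = -a + (finrank ℝ E - N) by ring, Real.rpow_add hR]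
      ring

theorem exists_abs_hypersingularIntegral_rieszTrunc_convolution_le (ha : 0 < a)
    (haE : a < finrank ℝ E) (hN : finrank ℝ E < N) (hN2 : N < finrank ℝ E + 2)
    (hψ : ContDiff ℝ 2 ψ) (hc : HasCompactSupport ψ) :
    ∃ B, 0 ≤ B ∧ ∀ R, 0 < R → ∀ x, 2 * R ≤ ‖x‖ →
      |hypersingularIntegral N (rieszTrunc a R ⋆ ψ) x| ≤
        B * R ^ (finrank ℝ E - a) * ‖x‖ ^ (-N) := by
  obtain ⟨K, hK0, hK⟩ := exists_abs_hypersingularIntegral_le hN hN2 hψ hc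
  have hN0 : 0 ≤ N := (Nat.cast_nonneg _).trans hN.le
  refine ⟨K * 2 ^ N * ∫ z in ball (0 : E) 1, ‖z‖ ^ (-a), by positivity, fun R hR x hx => ?_⟩
  have hx0 : 0 < ‖x‖ := by linarith
  have decay (y : E) (hy : y ≠ 0) : |hypersingularIntegral N ψ y| ≤ K * ‖y‖ ^ (-N) := by
    refine (hK y).trans (mul_le_mul_of_nonneg_left ?_ hK0)
    exact Real.rpow_le_rpow_of_nonpos (norm_pos_iff.2 hy) (by linarith) (neg_nonpos.2 hN0)
  rw [← integral_rieszTrunc_mul_hypersingularIntegral ha hN hN2 hR hψ hc x haE]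
  calc |∫ z, rieszTrunc a R z * hypersingularIntegral N ψ (x - z)|
      ≤ K * (‖x‖ / 2) ^ (-N) * ∫ z : E, |rieszTrunc a R z| :=
        norm_integral_mul_le_of_le_rpow_neg (integrable_rieszTrunc ha haE hR)
          (fun z hz => rieszTrunc_eq_zero ha hR hz.le) hN0 hK0 decay hx0 hx
    _ ≤ K * (‖x‖ / 2) ^ (-N) *
          (R ^ (finrank ℝ E - a) * ∫ z in ball (0 : E) 1, ‖z‖ ^ (-a)) := by
        gcongr
        exact integral_abs_rieszTrunc_le ha haE hR
    _ = _ := by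
        rw [Real.div_rpow hx0.le zero_le_two, Real.rpow_neg zero_le_two, div_inv_eq_mul]
        ring

theorem exists_abs_sub_hypersingularIntegral_rieszTrunc_convolution_le (ha : 0 < a)
    (haE : a < finrank ℝ E) (hN : finrank ℝ E < N) (hN2 : N < finrank ℝ E + 2)
    (hψ : ContDiff ℝ 2 ψ) (hc : HasCompactSupport ψ) {c : ℝ}
    (hG : ∀ x, c * ∫ z, ‖z‖ ^ (-a) * hypersingularIntegral N ψ (x - z) = ψ x) :
    ∃ K R₀, 0 < R₀ ∧ ∀ R, R₀ ≤ R → ∀ x,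
      |ψ x - c * hypersingularIntegral N (rieszTrunc a R ⋆ ψ) x| ≤
        K * (R ^ (finrank ℝ E - a) * (R + ‖x‖) ^ (-N)) := by
  obtain ⟨A, hA0, hA⟩ := exists_abs_hypersingularIntegral_rieszTail_convolution_le ha hN hN2
    (hψ.continuous.integrable_of_hasCompactSupport hc)
  obtain ⟨B, hB0, hB⟩ :=
    exists_abs_hypersingularIntegral_rieszTrunc_convolution_le ha haE hN hN2 hψ hc
  obtain ⟨M, hM0, hM⟩ := hc.exists_pos_le_norm
  refine ⟨|c| * (A * 3 ^ N + B * 2 ^ N), M, hM0, fun R hR x => ?_⟩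
  have hR0 : 0 < R := hM0.trans_le hR
  have near : |ψ x - c * hypersingularIntegral N (rieszTrunc a R ⋆ ψ) x| ≤
      |c| * (A * R ^ (finrank ℝ E - a - N)) := by
    rw [← hG x,
      integral_norm_rpow_neg_mul_hypersingularIntegral ha hN hN2 hR0 hψ hc x haE, mul_add,
      add_sub_cancel_left, abs_mul]
    gcongr
    exact hA R hR0 x
  have far (hx : 2 * R < ‖x‖) :
      |ψ x - c * hypersingularIntegral N (rieszTrunc a R ⋆ ψ) x| ≤
        |c| * (B * R ^ (finrank ℝ E - a)) * ‖x‖ ^ (-N) := by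
    rw [hM x (by linarith), zero_sub, abs_neg, abs_mul, mul_assoc]
    gcongr
    exact hB R hR0 x hx.le
  refine (le_mul_add_rpow_neg hR0 (norm_nonneg x) ((Nat.cast_nonneg _).trans hN.le)
    (by positivity) (by positivity) (fun _ => near) far).trans_eq ?_
  rw [Real.rpow_sub hR0, Real.mul_rpow zero_le_three hR0.le]
  field_simp

end TruncationError

section FracLapTruncationError

theorem hasCompactSupport_rieszTrunc {E : Type*} [NormedAddCommGroup E] [ProperSpace E] {a R : ℝ}
    (ha : 0 < a) (hR : 0 < R) : HasCompactSupport (rieszTrunc a R : E → ℝ) :=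
  HasCompactSupport.intro (isCompact_closedBall 0 R) fun z hz =>
    rieszTrunc_eq_zero ha hR (by simpa using (not_le.1 (mt mem_closedBall_zero_iff.2 hz)).le)

section Convolution

variable {E : Type*} [NormedAddCommGroup E] [NormedSpace ℝ E] [FiniteDimensional ℝ E]
  [MeasurableSpace E] {μ : Measure E} {a R : ℝ} {ψ : E → ℝ}

theorem hasCompactSupport_rieszTrunc_convolution (ha : 0 < a) (hR : 0 < R)
    (hc : HasCompactSupport ψ) : HasCompactSupport (rieszTrunc a R ⋆[lsmul ℝ ℝ, μ] ψ) :=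
  (hasCompactSupport_rieszTrunc ha hR).convolution _ hc

theorem contDiff_rieszTrunc_convolution [BorelSpace E] [Nontrivial E] [μ.IsAddHaarMeasure]
    (ha : 0 < a) (haE : a < finrank ℝ E) (hR : 0 < R) {n : ℕ∞} (hψ : ContDiff ℝ n ψ)
    (hc : HasCompactSupport ψ) : ContDiff ℝ n (rieszTrunc a R ⋆[lsmul ℝ ℝ, μ] ψ) :=
  hc.contDiff_convolution_right _ (integrable_rieszTrunc ha haE hR).locallyIntegrable hψ

end Convolution

variable {d : ℕ} [NeZero d] {s Cds κ : ℝ} {ψ : Ed d → ℝ}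

theorem fracLap_eq_hypersingularIntegral_of_contDiff (hs : s ∈ Ioo 0 1) (C : ℝ)
    (hψ : ContDiff ℝ 2 ψ) (hc : HasCompactSupport ψ) (x : Ed d) :
    fracLap d s C ψ x = C * hypersingularIntegral (d + 2 * s) ψ x := by
  obtain ⟨A, hA⟩ := hψ.continuous.bounded_above_of_compact_support hc
  obtain ⟨D, -, hD⟩ := exists_abs_secondDiff_le hψ hc
  exact fracLap_eq_hypersingularIntegral hs C hψ.continuous.measurable hA one_pos
    (by simpa using hD x)

theorem mul_integral_norm_rpow_neg_mul_hypersingularIntegral_eq (hs : s ∈ Ioo 0 1)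
    (hGreen : ∀ φ : Ed d → ℝ, ContDiff ℝ (⊤ : ℕ∞) φ → HasCompactSupport φ →
      ∫ x : Ed d, (κ * ‖x‖ ^ (-((d : ℝ) - 2 * s))) * fracLap d s Cds φ x = φ 0)
    (hψ : ContDiff ℝ (⊤ : ℕ∞) ψ) (hc : HasCompactSupport ψ) (x : Ed d) :
    κ * Cds * ∫ z, ‖z‖ ^ (-((d : ℝ) - 2 * s)) * hypersingularIntegral (d + 2 * s) ψ (x - z) =
      ψ x := by
  have hφ : ContDiff ℝ (⊤ : ℕ∞) fun z => ψ (x - z) := hψ.comp (contDiff_const.sub contDiff_id)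
  have hcφ : HasCompactSupport fun z => ψ (x - z) := hc.comp_homeomorph (Homeomorph.subLeft x)
  have green := hGreen _ hφ hcφ
  simp only [fracLap_eq_hypersingularIntegral_of_contDiff hs Cds (contDiff_infty.1 hφ 2) hcφ,
    hypersingularIntegral_comp_sub_left, sub_zero] at green
  rw [← green, ← integral_const_mul]
  congr! 2
  ring

theorem exists_abs_sub_fracLap_rieszTrunc_convolution_le (hs : s ∈ Ioo 0 1) (hds : 2 * s < d)
    (hGreen : ∀ φ : Ed d → ℝ, ContDiff ℝ (⊤ : ℕ∞) φ → HasCompactSupport φ →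
      ∫ x : Ed d, (κ * ‖x‖ ^ (-((d : ℝ) - 2 * s))) * fracLap d s Cds φ x = φ 0)
    (hψ : ContDiff ℝ (⊤ : ℕ∞) ψ) (hc : HasCompactSupport ψ) :
    ∃ K R₀, 0 < R₀ ∧ ∀ R, R₀ ≤ R → ∀ x,
      |ψ x - κ * fracLap d s Cds (rieszTrunc (d - 2 * s) R ⋆ ψ) x| ≤
        K * (R ^ (2 * s) * (R + ‖x‖) ^ (-(d + 2 * s))) := by
  have ha : 0 < d - 2 * s := sub_pos.2 hds
  have hn : (finrank ℝ (Ed d) : ℝ) = d := by rw [finrank_euclideanSpace_fin]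
  have haE : d - 2 * s < finrank ℝ (Ed d) := by linarith [hs.1]
  obtain ⟨K, R₀, hR₀, hK⟩ := exists_abs_sub_hypersingularIntegral_rieszTrunc_convolution_le ha haE
    (by linarith [hs.1]) (by linarith [hs.2]) (contDiff_infty.1 hψ 2) hc
    (mul_integral_norm_rpow_neg_mul_hypersingularIntegral_eq hs hGreen hψ hc)
  refine ⟨K, R₀, hR₀, fun R hR x => ?_⟩
  have hR0 : 0 < R := hR₀.trans_le hR
  rw [fracLap_eq_hypersingularIntegral_of_contDiff hs Cds
    (contDiff_rieszTrunc_convolution ha haE hR0 (n := 2) (contDiff_infty.1 hψ 2) hc)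
    (hasCompactSupport_rieszTrunc_convolution ha hR0 hc), ← mul_assoc]
  convert hK R hR x using 4
  rw [hn]
  ring

end FracLapTruncationError

section WeakConvergence

variable {α : Type*} [MeasurableSpace α] {μ : Measure α} {p q C : ℝ≥0∞} [p.HolderConjugate q]
  {f : α → ℝ}

theorem eLpNorm_indicator_mul_le {g : α → ℝ} (hf : AEStronglyMeasurable f μ)
    (hg : AEStronglyMeasurable g μ) (hgC : eLpNorm g q μ ≤ C) {t : Set α} (ht : MeasurableSet t)
    {ε : ℝ≥0∞} (hft : eLpNorm (t.indicator f) p μ ≤ ε / (C + 1)) :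
    eLpNorm (t.indicator (f * g)) 1 μ ≤ ε := by
  calc eLpNorm (t.indicator (f * g)) 1 μ
      = eLpNorm (t.indicator f * g) 1 μ := by
        congr 1
        ext x
        exact indicator_mul_left t f g
    _ ≤ eLpNorm (t.indicator f) p μ * eLpNorm g q μ :=
        eLpNorm_smul_le_mul_eLpNorm (r := 1) (φ := t.indicator f) hg (hf.indicator ht)
    _ ≤ ε / (C + 1) * (C + 1) := by gcongr; exact hgC.trans le_self_add
    _ ≤ ε := ENNReal.mul_le_of_le_div le_rfl

variable {ι : Type*} {g : ι → α → ℝ}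

theorem unifIntegrable_mul_of_eLpNorm_le (hp : p ≠ ∞) (hf : MemLp f p μ)
    (hg : ∀ n, AEStronglyMeasurable (g n) μ) (hC : C ≠ ∞) (hgC : ∀ n, eLpNorm (g n) q μ ≤ C) :
    UnifIntegrable (fun n => f * g n) 1 μ := by
  intro ε hε
  have small_pos : 0 < ENNReal.ofReal ε / (C + 1) := by
    simp [ENNReal.div_pos_iff, hε, hC]
  have small_ne_top : ENNReal.ofReal ε / (C + 1) ≠ ∞ :=
    ENNReal.div_ne_top ENNReal.ofReal_ne_top (by simp)
  obtain ⟨δ, hδ, small⟩ := hf.eLpNorm_indicator_le (ENNReal.HolderConjugate.one_le p q) hp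
    (ENNReal.toReal_pos small_pos.ne' small_ne_top)
  rw [ENNReal.ofReal_toReal small_ne_top] at small
  exact ⟨δ, hδ, fun n t ht htδ =>
    eLpNorm_indicator_mul_le hf.1 (hg n) (hgC n) ht (small t ht htδ)⟩

theorem unifTight_mul_of_eLpNorm_le (hp : p ≠ ∞) (hf : MemLp f p μ)
    (hg : ∀ n, AEStronglyMeasurable (g n) μ) (hC : C ≠ ∞) (hgC : ∀ n, eLpNorm (g n) q μ ≤ C) :
    UnifTight (fun n => f * g n) 1 μ := by
  intro ε hε
  obtain ⟨t, ht, htμ, small⟩ := hf.exists_eLpNorm_indicator_compl_lt hp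
    (ε := ε / (C + 1)) (by simp [hε.ne', hC])
  exact ⟨t, htμ.ne, fun n => eLpNorm_indicator_mul_le hf.1 (hg n) (hgC n) ht.compl small.le⟩

theorem tendsto_integral_mul_zero_of_eLpNorm_le {g : ℕ → α → ℝ} (hp : p ≠ ∞) (hf : MemLp f p μ)
    (hg : ∀ n, AEStronglyMeasurable (g n) μ) (hC : C ≠ ∞) (hgC : ∀ n, eLpNorm (g n) q μ ≤ C)
    (hlim : ∀ᵐ x ∂μ, Tendsto (fun n => g n x) atTop (𝓝 0)) :
    Tendsto (fun n => ∫ x, f x * g n x ∂μ) atTop (𝓝 0) := by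
  have tendsto_L1 : Tendsto (fun n => eLpNorm (f * g n - 0) 1 μ) atTop (𝓝 0) := by
    refine tendsto_Lp_of_tendsto_ae le_rfl ENNReal.one_ne_top (fun n => hf.1.mul (hg n))
      MemLp.zero (unifIntegrable_mul_of_eLpNorm_le hp hf hg hC hgC)
      (unifTight_mul_of_eLpNorm_le hp hf hg hC hgC) ?_
    filter_upwards [hlim] with x hx
    simpa using hx.const_mul (f x)
  have int (n : ℕ) : Integrable (f * g n) μ :=
    hf.integrable_mul ⟨hg n, (hgC n).trans_lt hC.lt_top⟩
  simpa only [integral_zero', Pi.mul_apply] using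
    tendsto_integral_of_L1' 0 aestronglyMeasurable_zero (Eventually.of_forall int) tendsto_L1

end WeakConvergence

section EscapingTails

theorem eLpNorm_le_of_norm_rpow_le {α F : Type*} [MeasurableSpace α] {μ : Measure α}
    [NormedAddCommGroup F] {q : ℝ} (hq : 0 < q) {f : α → F} {G : α → ℝ} (hG : Integrable G μ)
    (hfG : ∀ x, ‖f x‖ ^ q ≤ G x) :
    eLpNorm f (ENNReal.ofReal q) μ ≤ ENNReal.ofReal (∫ x, G x ∂μ) ^ (1 / q) := by
  have G_nonneg (x : α) : 0 ≤ G x := (by positivity : 0 ≤ ‖f x‖ ^ q).trans (hfG x)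
  rw [eLpNorm_eq_lintegral_rpow_enorm_toReal (by simpa using hq) ENNReal.ofReal_ne_top,
    ENNReal.toReal_ofReal hq.le, ofReal_integral_eq_lintegral_ofReal hG (ae_of_all _ G_nonneg)]
  gcongr with x
  rw [← ofReal_norm, ENNReal.ofReal_rpow_of_nonneg (norm_nonneg _) hq.le]
  exact ENNReal.ofReal_le_ofReal (hfG x)

variable {E : Type*} [NormedAddCommGroup E]

theorem rpow_mul_add_norm_rpow_neg_mul_rpow_le {p q D R : ℝ} (t : ℝ) (hpq : p.HolderConjugate q)
    (hD : 0 ≤ D) (hR : 1 ≤ R) (x : E) :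
    (R ^ t * (R + ‖x‖) ^ (-(D + t)) * (1 + ‖x‖) ^ (D / p)) ^ q ≤
      R ^ (D + t * q - D) * (R + ‖x‖) ^ (-(D + t * q)) := by
  have hR0 : 0 < R := by linarith
  have hRx : 0 < R + ‖x‖ := by positivity
  have hp := hpq.pos
  have exponent : (-(D + t) + D / p) * q = -(D + t * q) := by
    linear_combination (D * q) * hpq.inv_add_inv_eq_one - D * mul_inv_cancel₀ hpq.symm.ne_zero
  calc (R ^ t * (R + ‖x‖) ^ (-(D + t)) * (1 + ‖x‖) ^ (D / p)) ^ q
      ≤ (R ^ t * (R + ‖x‖) ^ (-(D + t)) * (R + ‖x‖) ^ (D / p)) ^ q := by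
        have := hpq.symm.nonneg
        gcongr
    _ = R ^ (t * q) * (R + ‖x‖) ^ (-(D + t * q)) := by
        rw [mul_assoc, ← Real.rpow_add hRx, Real.mul_rpow (by positivity) (by positivity),
          ← Real.rpow_mul hR0.le, ← Real.rpow_mul hRx.le, exponent]
    _ = _ := by rw [add_sub_cancel_left]

theorem mul_one_add_norm_rpow_neg_mul_eq (v : E → ℝ) (p t D R : ℝ) (x : E) :
    v x * (1 + ‖x‖) ^ (-(D / p)) * (R ^ t * (R + ‖x‖) ^ (-(D + t)) * (1 + ‖x‖) ^ (D / p)) =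
      v x * (R ^ t * (R + ‖x‖) ^ (-(D + t))) := by
  have cancel : (1 + ‖x‖) ^ (-(D / p)) * (1 + ‖x‖) ^ (D / p) = 1 := by
    rw [← Real.rpow_add (by positivity), neg_add_cancel, Real.rpow_zero]
  linear_combination v x * (R ^ t * (R + ‖x‖) ^ (-(D + t))) * cancel

theorem tendsto_rpow_mul_add_norm_rpow_neg {D t : ℝ} (hD : 0 < D) (hDt : 0 ≤ D + t) (x : E) :
    Tendsto (fun R : ℝ => R ^ t * (R + ‖x‖) ^ (-(D + t))) atTop (𝓝 0) := by
  refine squeeze_zero' ?_ ?_ (tendsto_rpow_neg_atTop hD)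
  · filter_upwards [eventually_gt_atTop 0] with R hR
    positivity
  · filter_upwards [eventually_gt_atTop 0] with R hR
    calc R ^ t * (R + ‖x‖) ^ (-(D + t)) ≤ R ^ t * R ^ (-(D + t)) := by
          gcongr R ^ t * ?_
          exact Real.rpow_le_rpow_of_nonpos hR (by linarith [norm_nonneg x]) (by linarith)
      _ = R ^ (-D) := by rw [← Real.rpow_add hR]; congr 1; ring

theorem memLp_mul_one_add_norm_rpow_neg [MeasurableSpace E] [OpensMeasurableSpace E]
    {μ : Measure E} {v : E → ℝ} {p D : ℝ} (hp : 0 < p) (hv : AEStronglyMeasurable v μ)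
    (hvp : Integrable (fun x => |v x| ^ p * (1 + ‖x‖) ^ (-D)) μ) :
    MemLp (fun x => v x * (1 + ‖x‖) ^ (-(D / p))) (ENNReal.ofReal p) μ := by
  have weight_meas : AEStronglyMeasurable (fun x : E => (1 + ‖x‖) ^ (-(D / p))) μ :=
    Measurable.aestronglyMeasurable (by fun_prop)
  rw [← integrable_norm_rpow_iff (f := fun x => v x * _) (hv.mul weight_meas)
    (by simpa using hp) ENNReal.ofReal_ne_top,
    ENNReal.toReal_ofReal hp.le]
  refine hvp.congr (ae_of_all _ fun x => ?_)
  beta_reduce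
  rw [norm_mul, Real.norm_of_nonneg (by positivity : 0 ≤ (1 + ‖x‖) ^ (-(D / p))),
    Real.mul_rpow (norm_nonneg _) (by positivity), ← Real.rpow_mul (by positivity), neg_mul,
    div_mul_cancel₀ D hp.ne', Real.norm_eq_abs]

variable [NormedSpace ℝ E]

theorem rpow_mul_add_norm_rpow_neg_eq {D m R : ℝ} (hR : 0 < R) (x : E) :
    R ^ (m - D) * (R + ‖x‖) ^ (-m) = R ^ (-D) * (1 + ‖R⁻¹ • x‖) ^ (-m) := by
  have scale : R + ‖x‖ = R * (1 + ‖R⁻¹ • x‖) := by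
    rw [norm_smul, norm_inv, Real.norm_of_nonneg hR.le, mul_add, mul_inv_cancel_left₀ hR.ne',
      mul_one]
  rw [scale, Real.mul_rpow hR.le (by positivity), ← mul_assoc, ← Real.rpow_add hR]
  congr 2
  ring

variable [FiniteDimensional ℝ E] [MeasurableSpace E] [BorelSpace E] {μ : Measure E}
  [μ.IsAddHaarMeasure]

theorem integrable_rpow_mul_add_norm_rpow_neg {D m R : ℝ} (hm : finrank ℝ E < m) (hR : 0 < R) :
    Integrable (fun x : E => R ^ (m - D) * (R + ‖x‖) ^ (-m)) μ := by
  simp_rw [rpow_mul_add_norm_rpow_neg_eq hR]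
  exact ((integrable_one_add_norm hm).comp_smul (inv_ne_zero hR.ne')).const_mul _

theorem integral_rpow_mul_add_norm_rpow_neg {m R : ℝ} (hR : 0 < R) :
    ∫ x : E, R ^ (m - finrank ℝ E) * (R + ‖x‖) ^ (-m) ∂μ = ∫ x : E, (1 + ‖x‖) ^ (-m) ∂μ := by
  simp_rw [rpow_mul_add_norm_rpow_neg_eq hR]
  rw [integral_const_mul, Measure.integral_comp_inv_smul_of_nonneg μ
    (fun x : E => (1 + ‖x‖) ^ (-m)) hR.le, smul_eq_mul, ← mul_assoc, ← Real.rpow_natCast R,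
    ← Real.rpow_add hR, neg_add_cancel, Real.rpow_zero, one_mul]

variable {p q t : ℝ}

theorem eLpNorm_rpow_mul_add_norm_rpow_neg_mul_le (hpq : p.HolderConjugate q) (ht : 0 < t) {R : ℝ}
    (hR : 1 ≤ R) :
    eLpNorm (fun x : E => R ^ t * (R + ‖x‖) ^ (-(finrank ℝ E + t)) *
        (1 + ‖x‖) ^ (finrank ℝ E / p)) (ENNReal.ofReal q) μ ≤
      ENNReal.ofReal (∫ x : E, (1 + ‖x‖) ^ (-(finrank ℝ E + t * q)) ∂μ) ^ (1 / q) := by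
  have hq := hpq.symm.pos
  have hR0 : 0 < R := by linarith
  rw [← integral_rpow_mul_add_norm_rpow_neg hR0]
  refine eLpNorm_le_of_norm_rpow_le hq
    (integrable_rpow_mul_add_norm_rpow_neg (lt_add_of_pos_right _ (by positivity)) hR0) fun x => ?_
  rw [Real.norm_of_nonneg (by positivity)]
  exact rpow_mul_add_norm_rpow_neg_mul_rpow_le t hpq (Nat.cast_nonneg _) hR x

variable {v : E → ℝ}

theorem integrable_mul_rpow_mul_add_norm_rpow_neg (hp : 1 < p) (ht : 0 < t)
    (hv : AEStronglyMeasurable v μ)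
    (hvp : Integrable (fun x => |v x| ^ p * (1 + ‖x‖) ^ (-(finrank ℝ E : ℝ))) μ) {R : ℝ}
    (hR : 1 ≤ R) :
    Integrable (fun x => v x * (R ^ t * (R + ‖x‖) ^ (-(finrank ℝ E + t)))) μ := by
  have hpq := Real.HolderConjugate.conjExponent hp
  have := hpq.ennrealOfReal
  have memLp_tail : MemLp (fun x : E => R ^ t * (R + ‖x‖) ^ (-(finrank ℝ E + t)) *
      (1 + ‖x‖) ^ (finrank ℝ E / p)) (ENNReal.ofReal p.conjExponent) μ :=
    ⟨Measurable.aestronglyMeasurable (by fun_prop),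
      (eLpNorm_rpow_mul_add_norm_rpow_neg_mul_le hpq ht hR).trans_lt
        (ENNReal.rpow_lt_top_of_nonneg (one_div_nonneg.2 hpq.symm.nonneg) ENNReal.ofReal_ne_top)⟩
  refine ((memLp_mul_one_add_norm_rpow_neg (by linarith) hv hvp).integrable_mul memLp_tail).congr
    (ae_of_all _ fun x => ?_)
  exact mul_one_add_norm_rpow_neg_mul_eq v p t _ R x

theorem tendsto_integral_mul_rpow_mul_add_norm_rpow_neg [Nontrivial E] (hp : 1 < p) (ht : 0 < t)
    (hv : AEStronglyMeasurable v μ)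
    (hvp : Integrable (fun x => |v x| ^ p * (1 + ‖x‖) ^ (-(finrank ℝ E : ℝ))) μ) {R : ℕ → ℝ}
    (hR : ∀ n, 1 ≤ R n) (hRtop : Tendsto R atTop atTop) :
    Tendsto (fun n => ∫ x, v x * (R n ^ t * (R n + ‖x‖) ^ (-(finrank ℝ E + t))) ∂μ)
      atTop (𝓝 0) := by
  have hpq := Real.HolderConjugate.conjExponent hp
  have := hpq.ennrealOfReal
  have finrank_pos' : 0 < (finrank ℝ E : ℝ) := by exact_mod_cast finrank_pos
  have weak_limit := tendsto_integral_mul_zero_of_eLpNorm_le (q := ENNReal.ofReal p.conjExponent)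
    ENNReal.ofReal_ne_top (memLp_mul_one_add_norm_rpow_neg (by linarith) hv hvp)
    (fun n => Measurable.aestronglyMeasurable (by fun_prop))
    (ENNReal.rpow_lt_top_of_nonneg (one_div_nonneg.2 hpq.symm.nonneg) ENNReal.ofReal_ne_top).ne
    (fun n => eLpNorm_rpow_mul_add_norm_rpow_neg_mul_le hpq ht (hR n)) (ae_of_all _ fun x => by
      simpa using ((tendsto_rpow_mul_add_norm_rpow_neg finrank_pos' (by positivity) x).comp
        hRtop).mul_const ((1 + ‖x‖) ^ (finrank ℝ E / p)))
  simpa only [mul_one_add_norm_rpow_neg_mul_eq] using weak_limit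

end EscapingTails

section RieszDuality

variable {E : Type*} [NormedAddCommGroup E] [NormedSpace ℝ E] [FiniteDimensional ℝ E]
  [MeasurableSpace E] [BorelSpace E] {μ : Measure E} [μ.IsAddHaarMeasure]
  {a : ℝ}

theorem integral_norm_sub_rpow_neg_mul (ψ : E → ℝ) (y : E) :
    ∫ x, ‖x - y‖ ^ (-a) * ψ x ∂μ = ((fun z : E => ‖z‖ ^ (-a)) ⋆[lsmul ℝ ℝ, μ] ψ) y := by
  simp only [convolution_lsmul_swap, smul_eq_mul, norm_sub_rev y]

theorem integral_mul_norm_sub_rpow_neg_mul (V : E → ℝ) (b : ℝ) (x : E) :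
    ∫ y, V y * (‖x - y‖ ^ (-a) * b) ∂μ =
      b * ((fun z : E => ‖z‖ ^ (-a)) ⋆[lsmul ℝ ℝ, μ] V) x := by
  rw [convolution_lsmul_swap, ← integral_const_mul]
  congr with y
  rw [smul_eq_mul]
  ring

variable [Nontrivial E] {V ψ : E → ℝ}

theorem integrable_norm_sub_rpow_neg_mul (haE : a < finrank ℝ E) (hψ : Continuous ψ)
    (hc : HasCompactSupport ψ) (y : E) : Integrable (fun x => ‖x - y‖ ^ (-a) * ψ x) μ := by
  simpa only [lsmul_apply, smul_eq_mul, norm_sub_rev y] using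
    (convolutionExists_norm_rpow_neg (μ := μ) haE hψ hc y).integrable_swap

theorem integrable_prod_mul_norm_sub_rpow_neg_mul (ha : 0 ≤ a) (haE : a < finrank ℝ E)
    (hV : AEStronglyMeasurable V μ)
    (hVint : Integrable (fun x => |V x| * (1 + ‖x‖) ^ (-a)) μ) (hψ : Continuous ψ)
    (hc : HasCompactSupport ψ) :
    Integrable (fun z : E × E => V z.2 * (‖z.1 - z.2‖ ^ (-a) * ψ z.1)) (μ.prod μ) := by
  obtain ⟨C, -, hC⟩ := exists_abs_norm_rpow_neg_convolution_le (μ := μ) ha haE hψ.abs hc.norm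
  have meas : AEStronglyMeasurable (fun z : E × E => V z.2 * (‖z.1 - z.2‖ ^ (-a) * ψ z.1))
      (μ.prod μ) :=
    hV.comp_snd.mul (Measurable.aestronglyMeasurable (by fun_prop))
  have integral_norm_slice (y : E) : ∫ x, ‖V y * (‖x - y‖ ^ (-a) * ψ x)‖ ∂μ =
      |V y| * ((fun z : E => ‖z‖ ^ (-a)) ⋆[lsmul ℝ ℝ, μ] fun x => |ψ x|) y := by
    rw [← integral_norm_sub_rpow_neg_mul, ← integral_const_mul]
    congr with x
    rw [norm_mul, norm_mul, Real.norm_of_nonneg (by positivity : 0 ≤ ‖x - y‖ ^ (-a)),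
      Real.norm_eq_abs, Real.norm_eq_abs]
  refine (integrable_prod_iff' meas).2
    ⟨ae_of_all _ fun y => (integrable_norm_sub_rpow_neg_mul haE hψ hc y).const_mul (V y), ?_⟩
  refine (hVint.const_mul C).mono' meas.norm.prod_swap.integral_prod_right'
    (ae_of_all _ fun y => ?_)
  rw [integral_norm_slice, Real.norm_eq_abs, abs_mul, abs_abs, mul_left_comm]
  gcongr
  exact hC y

theorem integrable_mul_norm_rpow_neg_convolution (ha : 0 ≤ a) (haE : a < finrank ℝ E)
    (hV : AEStronglyMeasurable V μ)
    (hVint : Integrable (fun x => |V x| * (1 + ‖x‖) ^ (-a)) μ) (hψ : Continuous ψ)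
    (hc : HasCompactSupport ψ) :
    Integrable (fun x => ψ x * ((fun z : E => ‖z‖ ^ (-a)) ⋆[lsmul ℝ ℝ, μ] V) x) μ := by
  simpa only [integral_mul_norm_sub_rpow_neg_mul] using
    (integrable_prod_mul_norm_sub_rpow_neg_mul ha haE hV hVint hψ hc).integral_prod_left

theorem integral_mul_norm_rpow_neg_convolution (ha : 0 ≤ a) (haE : a < finrank ℝ E)
    (hV : AEStronglyMeasurable V μ)
    (hVint : Integrable (fun x => |V x| * (1 + ‖x‖) ^ (-a)) μ) (hψ : Continuous ψ)
    (hc : HasCompactSupport ψ) :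
    ∫ x, ψ x * ((fun z : E => ‖z‖ ^ (-a)) ⋆[lsmul ℝ ℝ, μ] V) x ∂μ =
      ∫ y, V y * ((fun z : E => ‖z‖ ^ (-a)) ⋆[lsmul ℝ ℝ, μ] ψ) y ∂μ := by
  simpa only [integral_mul_norm_sub_rpow_neg_mul, integral_const_mul,
    integral_norm_sub_rpow_neg_mul] using
    integral_integral_swap (f := fun x y => V y * (‖x - y‖ ^ (-a) * ψ x))
      (integrable_prod_mul_norm_sub_rpow_neg_mul ha haE hV hVint hψ hc)

theorem locallyIntegrable_norm_rpow_neg_convolution (ha : 0 ≤ a) (haE : a < finrank ℝ E)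
    (hV : AEStronglyMeasurable V μ)
    (hVint : Integrable (fun x => |V x| * (1 + ‖x‖) ^ (-a)) μ) :
    LocallyIntegrable ((fun z : E => ‖z‖ ^ (-a)) ⋆[lsmul ℝ ℝ, μ] V) μ := by
  refine locallyIntegrable_iff.2 fun K hK => ?_
  obtain ⟨f, hf1, hfc, -, -⟩ :=
    exists_continuousMap_one_of_isCompact_subset_isOpen hK isOpen_univ (subset_univ K)
  refine (integrable_mul_norm_rpow_neg_convolution ha haE hV hVint f.continuous
    hfc).integrableOn.congr_fun (fun x hx => ?_) hK.measurableSet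
  beta_reduce
  rw [hf1 hx, Pi.one_apply, one_mul]

end RieszDuality

section WeightedSpaces

theorem locallyIntegrable_of_integrable_rpow_mul_one_add_norm {E : Type*} [NormedAddCommGroup E]
    [ProperSpace E] [MeasurableSpace E] [OpensMeasurableSpace E] {μ : Measure E}
    [IsLocallyFiniteMeasure μ] {v : E → ℝ} {p D : ℝ} (hp : 1 ≤ p) (hv : AEStronglyMeasurable v μ)
    (hvp : Integrable (fun x => |v x| ^ p * (1 + ‖x‖) ^ (-D)) μ) : LocallyIntegrable v μ := by
  have weighted : LocallyIntegrable (fun x => v x * (1 + ‖x‖) ^ (-(D / p))) μ :=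
    (memLp_mul_one_add_norm_rpow_neg (by linarith) hv hvp).locallyIntegrable
      (ENNReal.one_le_ofReal.2 hp)
  have weight_continuous : Continuous fun x : E => (1 + ‖x‖) ^ (D / p) :=
    (by fun_prop : Continuous fun x : E => 1 + ‖x‖).rpow_const fun x => Or.inl (by positivity)
  refine locallyIntegrable_iff.2 fun K hK =>
    ((weighted.integrableOn_isCompact hK).mul_continuousOn weight_continuous.continuousOn
      hK).congr_fun (fun x _ => ?_) hK.measurableSet
  beta_reduce
  rw [mul_assoc, ← Real.rpow_add (by positivity), neg_add_cancel, Real.rpow_zero, mul_one]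

theorem mul_le_rpow_mul_rpow_neg_add_rpow_mul {p q a b r : ℝ} (hpq : p.HolderConjugate q)
    (ha : 0 ≤ a) (hb : 0 ≤ b) (hr : 0 < r) : a * b ≤ a ^ q * r ^ (-(q - 1)) + b ^ p * r := by
  have rpow_cancel : a * r ^ (-(1 / p)) * (b * r ^ (1 / p)) = a * b := by
    rw [mul_mul_mul_comm, ← Real.rpow_add hr, neg_add_cancel, Real.rpow_zero, mul_one]
  have left_rpow : (a * r ^ (-(1 / p))) ^ q = a ^ q * r ^ (-(q - 1)) := by
    rw [Real.mul_rpow ha (by positivity), ← Real.rpow_mul hr.le, neg_mul, one_div_mul_eq_div,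
      hpq.symm.div_conj_eq_sub_one]
  have right_rpow : (b * r ^ (1 / p)) ^ p = b ^ p * r := by
    rw [Real.mul_rpow hb (by positivity), ← Real.rpow_mul hr.le,
      one_div_mul_cancel hpq.ne_zero, Real.rpow_one]
  have young := Real.young_inequality_of_nonneg (a := a * r ^ (-(1 / p))) (b := b * r ^ (1 / p))
    (by positivity) (by positivity) hpq.symm
  rw [rpow_cancel, left_rpow, right_rpow] at young
  exact young.trans (add_le_add (div_le_self (by positivity) hpq.symm.lt.le)
    (div_le_self (by positivity) hpq.lt.le))

theorem integrable_mul_of_integrable_rpow_mul {α : Type*} [MeasurableSpace α] {μ : Measure α}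
    {p q : ℝ} (hpq : p.HolderConjugate q) {f g ρ : α → ℝ} (hρ : ∀ᵐ x ∂μ, 0 < ρ x)
    (hf : AEStronglyMeasurable f μ) (hg : AEStronglyMeasurable g μ)
    (hfρ : Integrable (fun x => |f x| ^ q * ρ x ^ (-(q - 1))) μ)
    (hgρ : Integrable (fun x => |g x| ^ p * ρ x) μ) : Integrable (fun x => f x * g x) μ := by
  refine (hfρ.add hgρ).mono' (hf.mul hg) ?_
  filter_upwards [hρ] with x hx
  rw [norm_mul]
  exact mul_le_rpow_mul_rpow_neg_add_rpow_mul hpq (abs_nonneg _) (abs_nonneg _) hx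

variable {d : ℕ} {ρ : Ed d → ℝ} {c C γ₀ γ p : ℝ}

theorem TwoPowerWeight.ae_mul_one_add_norm_rpow_le [NeZero d] (hw : TwoPowerWeight d ρ c C γ₀ γ)
    (hγ₀ : 0 ≤ γ₀) (hγ : γ ≤ d) : ∀ᵐ x, c * (1 + ‖x‖) ^ (-(d : ℝ)) ≤ ρ x := by
  obtain ⟨hc, -, near, far⟩ := hw
  filter_upwards [near, far, volume.ae_ne 0] with x near far hx0
  have hx : 0 < ‖x‖ := norm_pos_iff.2 hx0
  rcases le_or_gt ‖x‖ 1 with h | h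
  · refine le_trans ?_ (near h).1
    gcongr
    calc (1 + ‖x‖) ^ (-(d : ℝ)) ≤ 1 :=
          Real.rpow_le_one_of_one_le_of_nonpos (by linarith) (by simp)
      _ ≤ ‖x‖ ^ (-γ₀) := Real.one_le_rpow_of_pos_of_le_one_of_nonpos hx h (by linarith)
  · refine le_trans ?_ (far h).1
    gcongr
    calc (1 + ‖x‖) ^ (-(d : ℝ)) ≤ ‖x‖ ^ (-(d : ℝ)) :=
          Real.rpow_le_rpow_of_nonpos hx (by linarith) (by simp)
      _ ≤ ‖x‖ ^ (-γ) := Real.rpow_le_rpow_of_exponent_le h.le (by linarith)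

theorem MemWLp.mono_weight {w f : Ed d → ℝ} (hf : MemWLp d p ρ f) (hc : 0 < c)
    (hwm : AEStronglyMeasurable w) (hw : ∀ᵐ x, 0 ≤ w x) (hle : ∀ᵐ x, c * w x ≤ ρ x) :
    MemWLp d p w f := by
  refine ⟨hf.1, (hf.2.const_mul c⁻¹).mono'
    ((hf.1.norm.aemeasurable.pow_const p).aestronglyMeasurable.mul hwm) ?_⟩
  filter_upwards [hw, hle] with x hw0 hle
  rw [Real.norm_of_nonneg (by positivity), mul_left_comm]
  gcongr
  exact (le_inv_mul_iff₀ hc).2 hle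

theorem TwoPowerWeight.memWLp_one_add_norm_rpow_neg [NeZero d]
    (hw : TwoPowerWeight d ρ c C γ₀ γ) (hρm : AEStronglyMeasurable ρ) (hρ : ∀ᵐ x, 0 ≤ ρ x)
    (hp : 0 ≤ p) {a : ℝ} (ha : 0 ≤ a) (hγ₀ : γ₀ < d) (hγ : d < γ + a * p) :
    MemWLp d p ρ fun x => (1 + ‖x‖) ^ (-a) := by
  obtain ⟨-, -, near, far⟩ := hw
  have meas : Measurable fun x : Ed d => |(1 + ‖x‖) ^ (-a)| ^ p := by fun_prop
  refine ⟨Measurable.aestronglyMeasurable (by fun_prop), integrable_of_norm_le_rpow_near_far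
    (α := γ₀) (β := γ + a * p) (A := C) (B := C) (by rwa [finrank_euclideanSpace_fin])
    (by rwa [finrank_euclideanSpace_fin]) (meas.aestronglyMeasurable.mul hρm) ?_ ?_⟩
  · filter_upwards [near, hρ] with x near hρ hx
    rw [abs_of_nonneg (by positivity), Real.norm_of_nonneg (by positivity)]
    refine (mul_le_of_le_one_left hρ ?_).trans (near hx).2
    exact Real.rpow_le_one (by positivity)
      (Real.rpow_le_one_of_one_le_of_nonpos (by linarith [norm_nonneg x]) (by linarith)) hp
  · filter_upwards [far, hρ] with x far hρ hx
    have hx0 : 0 < ‖x‖ := by linarith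
    rw [abs_of_nonneg (by positivity), Real.norm_of_nonneg (by positivity)]
    calc ((1 + ‖x‖) ^ (-a)) ^ p * ρ x ≤ (‖x‖ ^ (-a)) ^ p * (C * ‖x‖ ^ (-γ)) := by
          gcongr ?_ ^ p * ?_
          · exact Real.rpow_le_rpow_of_nonpos hx0 (by linarith) (by linarith)
          · exact (far hx).2
      _ = C * ‖x‖ ^ (-(γ + a * p)) := by
          rw [← Real.rpow_mul hx0.le, mul_left_comm, ← Real.rpow_add hx0]
          congr 2
          ring

theorem MemWLp.one_add_norm_rpow_neg [NeZero d] {f : Ed d → ℝ} (hf : MemWLp d p ρ f)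
    (hw : TwoPowerWeight d ρ c C γ₀ γ) (hγ₀ : 0 ≤ γ₀) (hγ : γ ≤ d) :
    MemWLp d p (fun x => (1 + ‖x‖) ^ (-(d : ℝ))) f :=
  hf.mono_weight hw.1 (Measurable.aestronglyMeasurable (by fun_prop))
    (ae_of_all _ fun x => by positivity) (hw.ae_mul_one_add_norm_rpow_le hγ₀ hγ)

theorem MemWLp.integrable_abs_mul_one_add_norm_rpow_neg [NeZero d] {q a : ℝ} {f : Ed d → ℝ}
    (hf : MemWLp d q (fun x => ρ x ^ (-(q - 1))) f) (hw : TwoPowerWeight d ρ c C γ₀ γ)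
    (hρm : AEStronglyMeasurable ρ) (hρ : ∀ᵐ x, 0 < ρ x) (hpq : p.HolderConjugate q) (ha : 0 ≤ a)
    (hγ₀ : γ₀ < d) (hγ : d < γ + a * p) : Integrable fun x => |f x| * (1 + ‖x‖) ^ (-a) := by
  have kernel_mem := hw.memWLp_one_add_norm_rpow_neg hρm (hρ.mono fun _ => le_of_lt) hpq.nonneg
    ha hγ₀ hγ
  exact integrable_mul_of_integrable_rpow_mul hpq hρ hf.1.norm kernel_mem.1
    (by simpa only [Real.norm_eq_abs, abs_abs] using hf.2) kernel_mem.2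

end WeightedSpaces

section RieszRepresentation

theorem measurable_hypersingularIntegral {E : Type*} [NormedAddCommGroup E]
    [SecondCountableTopology E] [MeasureSpace E] [BorelSpace E] [SFinite (volume : Measure E)]
    {f : E → ℝ} (hf : Measurable f) (N : ℝ) : Measurable (hypersingularIntegral N f) := by
  have meas : Measurable (Function.uncurry fun x h => ‖h‖ ^ (-N) * (secondDiff f x h / 2)) := by
    unfold secondDiff Function.uncurry
    fun_prop
  exact (StronglyMeasurable.integral_prod_right meas.stronglyMeasurable).measurable

theorem riesz_eq_mul_convolution (d : ℕ) (s κ : ℝ) (V : Ed d → ℝ) (x : Ed d) :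
    riesz d s κ V x =
      κ * ((fun z : Ed d => ‖z‖ ^ (-((d : ℝ) - 2 * s))) ⋆[lsmul ℝ ℝ, volume] V) x := by
  simp only [riesz, convolution_lsmul_swap, smul_eq_mul, mul_assoc, integral_const_mul]

variable {d : ℕ} [NeZero d] {s Cds κ p : ℝ} {v V ψ : Ed d → ℝ}

theorem measurable_fracLap (hs : s ∈ Ioo 0 1) (C : ℝ) (hψ : ContDiff ℝ 2 ψ)
    (hc : HasCompactSupport ψ) : Measurable (fracLap d s C ψ) := by
  rw [funext (fracLap_eq_hypersingularIntegral_of_contDiff hs C hψ hc)]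
  exact (measurable_hypersingularIntegral hψ.continuous.measurable _).const_mul C

theorem tendsto_integral_mul_fracLap_rieszTrunc_convolution (hs : s ∈ Ioo 0 1) (hds : 2 * s < d)
    (hp : 1 < p)
    (hGreen : ∀ φ : Ed d → ℝ, ContDiff ℝ (⊤ : ℕ∞) φ → HasCompactSupport φ →
      ∫ x : Ed d, (κ * ‖x‖ ^ (-((d : ℝ) - 2 * s))) * fracLap d s Cds φ x = φ 0)
    (hv : MemWLp d p (fun x => (1 + ‖x‖) ^ (-(d : ℝ))) v)
    (hψ : ContDiff ℝ (⊤ : ℕ∞) ψ) (hc : HasCompactSupport ψ) {R : ℕ → ℝ} (hR : ∀ n, 1 ≤ R n)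
    (hRtop : Tendsto R atTop atTop) :
    Tendsto (fun n => κ * ∫ x, v x * fracLap d s Cds (rieszTrunc (d - 2 * s) (R n) ⋆ ψ) x) atTop
      (𝓝 (∫ x, ψ x * v x)) := by
  obtain ⟨K, R₀, -, error_le⟩ :=
    exists_abs_sub_fracLap_rieszTrunc_convolution_le hs hds hGreen hψ hc
  have hn : (finrank ℝ (Ed d) : ℝ) = d := by rw [finrank_euclideanSpace_fin]
  have ht : 0 < 2 * s := by linarith [hs.1]
  have ha : 0 < d - 2 * s := sub_pos.2 hds
  have hvp : Integrable fun x => |(|v x|)| ^ p * (1 + ‖x‖) ^ (-(finrank ℝ (Ed d) : ℝ)) := by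
    simpa only [abs_abs, hn] using hv.2
  have int_ψv : Integrable (fun x => ψ x * v x) :=
    (locallyIntegrable_of_integrable_rpow_mul_one_add_norm hp.le hv.1
      hv.2).integrable_smul_left_of_hasCompactSupport hψ.continuous hc
  have tails := (tendsto_integral_mul_rpow_mul_add_norm_rpow_neg hp ht hv.1.norm hvp hR
    hRtop).const_mul K
  simp only [hn, mul_zero] at tails
  rw [tendsto_iff_norm_sub_tendsto_zero]
  refine squeeze_zero' (Eventually.of_forall fun n => norm_nonneg _) ?_ tails
  filter_upwards [hRtop.eventually_ge_atTop R₀] with n hn₀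
  have hRn : 0 < R n := one_pos.trans_le (hR n)
  let u : Ed d → ℝ := fracLap d s Cds (rieszTrunc (d - 2 * s) (R n) ⋆ ψ)
  have meas_u : Measurable u := measurable_fracLap hs Cds
    (contDiff_rieszTrunc_convolution ha (by linarith) hRn (n := 2) (contDiff_infty.1 hψ 2) hc)
    (hasCompactSupport_rieszTrunc_convolution ha hRn hc)
  have int_tail :=
    (integrable_mul_rpow_mul_add_norm_rpow_neg hp ht hv.1.norm hvp (hR n)).const_mul K
  simp only [hn] at int_tail
  have error_bound (x : Ed d) : ‖v x * (ψ x - κ * u x)‖ ≤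
      K * (|v x| * (R n ^ (2 * s) * (R n + ‖x‖) ^ (-(d + 2 * s)))) := by
    rw [norm_mul, mul_left_comm]
    exact mul_le_mul_of_nonneg_left (error_le (R n) hn₀ x) (abs_nonneg _)
  have int_error : Integrable fun x => v x * (ψ x - κ * u x) :=
    int_tail.mono' (hv.1.mul (hψ.continuous.measurable.sub
      (meas_u.const_mul κ)).aestronglyMeasurable) (ae_of_all _ error_bound)
  have split (x : Ed d) : κ * (v x * u x) = ψ x * v x - v x * (ψ x - κ * u x) := by ring
  rw [← integral_const_mul, integral_congr_ae (ae_of_all _ split),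
    integral_sub int_ψv int_error, sub_sub_cancel_left, norm_neg, ← integral_const_mul]
  exact norm_integral_le_of_norm_le int_tail (ae_of_all _ error_bound)

theorem integral_mul_eq_integral_mul_riesz (hs : s ∈ Ioo 0 1) (hds : 2 * s < d) (hp : 1 < p)
    (hGreen : ∀ φ : Ed d → ℝ, ContDiff ℝ (⊤ : ℕ∞) φ → HasCompactSupport φ →
      ∫ x : Ed d, (κ * ‖x‖ ^ (-((d : ℝ) - 2 * s))) * fracLap d s Cds φ x = φ 0)
    (hv : MemWLp d p (fun x => (1 + ‖x‖) ^ (-(d : ℝ))) v) (hV : AEStronglyMeasurable V)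
    (hVint : Integrable fun x => |V x| * (1 + ‖x‖) ^ (-((d : ℝ) - 2 * s)))
    (hdist : IsDistFracLap d s Cds v V) (hψ : ContDiff ℝ (⊤ : ℕ∞) ψ) (hc : HasCompactSupport ψ) :
    ∫ x, ψ x * v x = ∫ x, ψ x * riesz d s κ V x := by
  have ha : 0 < d - 2 * s := sub_pos.2 hds
  have haE : d - 2 * s < finrank ℝ (Ed d) := by
    rw [finrank_euclideanSpace_fin]
    linarith [hs.1]
  have radii_tendsto : Tendsto (fun n : ℕ => (n : ℝ) + 1) atTop atTop :=
    tendsto_atTop_add_const_right _ _ tendsto_natCast_atTop_atTop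
  have lhs := tendsto_integral_mul_fracLap_rieszTrunc_convolution hs hds hp hGreen hv hψ hc
    (fun n => le_add_of_nonneg_left n.cast_nonneg) radii_tendsto
  have rhs := ((tendsto_integral_mul_rieszTrunc_convolution ha haE hψ.continuous hc hV
    hVint).const_mul κ).comp radii_tendsto
  have dual (n : ℕ) : ∫ x, v x * fracLap d s Cds (rieszTrunc (d - 2 * s) (n + 1) ⋆ ψ) x =
      ∫ x, V x * (rieszTrunc (d - 2 * s) ((n : ℝ) + 1) ⋆[lsmul ℝ ℝ, volume] ψ) x :=
    hdist _ (contDiff_rieszTrunc_convolution ha haE (by positivity) hψ hc)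
      (hasCompactSupport_rieszTrunc_convolution ha (by positivity) hc)
  simp only [dual] at lhs
  rw [tendsto_nhds_unique lhs rhs, ← integral_mul_norm_rpow_neg_convolution ha.le haE hV hVint
    hψ.continuous hc, ← integral_const_mul]
  simp only [riesz_eq_mul_convolution, mul_left_comm]

end RieszRepresentation

theorem stmt18_general (d : ℕ) (s : ℝ) (hs : s ∈ Ioo 0 1) (hds : 2 * s < d) (Cds p : ℝ)
    (hp : 1 < p) (κ : ℝ)
    (hGreen : ∀ φ : Ed d → ℝ, ContDiff ℝ (⊤ : ℕ∞) φ → HasCompactSupport φ →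
      ∫ x : Ed d, (κ * ‖x‖ ^ (-((d : ℝ) - 2 * s))) * fracLap d s Cds φ x = φ 0)
    (v V : Ed d → ℝ) (hv : MemWLp d p (fun x => (1 + ‖x‖) ^ (-(d : ℝ))) v)
    (hV : AEStronglyMeasurable V)
    (hVint : Integrable fun x => |V x| * (1 + ‖x‖) ^ (-((d : ℝ) - 2 * s)))
    (hdist : IsDistFracLap d s Cds v V) : ∀ᵐ x, v x = riesz d s κ V x := by
  have : NeZero d := ⟨by rintro rfl; linarith [hs.1, Nat.cast_zero (R := ℝ)]⟩
  have riesz_locallyIntegrable : LocallyIntegrable (riesz d s κ V) := by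
    rw [funext (riesz_eq_mul_convolution d s κ V)]
    refine (locallyIntegrable_norm_rpow_neg_convolution (sub_pos.2 hds).le ?_ hV hVint).smul κ
    rw [finrank_euclideanSpace_fin]
    linarith [hs.1]
  exact ae_eq_of_integral_contDiff_smul_eq
    (locallyIntegrable_of_integrable_rpow_mul_one_add_norm hp.le hv.1 hv.2) riesz_locallyIntegrable
    fun ψ hψ hc => integral_mul_eq_integral_mul_riesz hs hds hp hGreen hv hV hVint hdist hψ hc

theorem stmt18 (d : ℕ) (hd : 1 ≤ d) (s : ℝ) (hs : s ∈ Set.Ioo (0:ℝ) 1)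
    (hds : 2 * s < (d:ℝ)) (Cds : ℝ) (hC : 0 < Cds)
    (p : ℝ) (hp1 : 2 ≤ p) (hp2 : p ≤ 2 * d / ((d:ℝ) - 2 * s))
    (ρ : Ed d → ℝ) (hρpos : ∀ x, 0 < ρ x) (hρm : Measurable ρ)
    (c C γ₀ γ : ℝ) (hw : TwoPowerWeight d ρ c C γ₀ γ)
    (hγ₀ : γ₀ ∈ Set.Ico (0:ℝ) d)
    (hγ : γ ∈ Set.Ioc ((d:ℝ) - (p / 2) * ((d:ℝ) - 2 * s)) (d:ℝ))
    (κ : ℝ) (hκ : 0 < κ)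
    (hGreen : ∀ φ : Ed d → ℝ, ContDiff ℝ (⊤ : ℕ∞) φ → HasCompactSupport φ →
      ∫ x : Ed d, (κ * ‖x‖ ^ (-((d:ℝ) - 2 * s))) * fracLap d s Cds φ x = φ 0) :
    ∀ v V : Ed d → ℝ, MemX d s Cds p ρ v V →
      ∀ᵐ x : Ed d, v x = riesz d s κ V x := by
  have : NeZero d := ⟨by omega⟩
  rintro v V ⟨hv, hdist, hV⟩
  exact stmt18_general d s hs hds Cds p (by linarith) κ hGreen v V
    (hv.one_add_norm_rpow_neg hw hγ₀.1 hγ.2) hV.1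
    (hV.integrable_abs_mul_one_add_norm_rpow_neg hw hρm.aestronglyMeasurable (ae_of_all _ hρpos)
      (.conjExponent (by linarith)) (by linarith) hγ₀.2 (by nlinarith [hγ.1])) hdist
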